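/- arXiv:0804.3500 — 2 statements merged into one kernel-verified Lean document; each statement's English description precedes it below -/
import Mathlib

section
/- Representation Theorem: Let (M, φ) be a size pair with reduced size function ℓ*. For every (x̄, ȳ) ∈ Δ⁺, ℓ*(x̄, ȳ) equals the sum of the multiplicities μ(x,y) over all points (x,y) ∈ Δ* (proper points and points at infinity) with x ≤ x̄ and y > ȳ. -/
open Set Topology
open scoped ENNReal

noncomputable def rsf {M : Type*} [TopologicalSpace M] (φ : M → ℝ) (x y : ℝ) : ℕ :=
  Set.ncard {C : Set M | ∃ P, φ P ≤ x ∧ C = connectedComponentIn {Q | φ Q ≤ y} P}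

noncomputable def mult {M : Type*} [TopologicalSpace M] (φ : M → ℝ) (p : ℝ × ℝ) : ℤ :=
  sInf {z : ℤ | ∃ ε : ℝ, 0 < ε ∧ p.1 + ε < p.2 - ε ∧
    z = (rsf φ (p.1 + ε) (p.2 - ε) : ℤ) - (rsf φ (p.1 - ε) (p.2 - ε) : ℤ)
      - (rsf φ (p.1 + ε) (p.2 + ε) : ℤ) + (rsf φ (p.1 - ε) (p.2 + ε) : ℤ)}

noncomputable def multInf {M : Type*} [TopologicalSpace M] (φ : M → ℝ) (k : ℝ) : ℤ :=
  sInf {z : ℤ | ∃ ε : ℝ, 0 < ε ∧ k + ε < 1 / ε ∧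
    z = (rsf φ (k + ε) (1 / ε) : ℤ) - (rsf φ (k - ε) (1 / ε) : ℤ)}

open scoped Classical in
noncomputable def eDist (p q : ℝ × EReal) : ℝ≥0∞ :=
  if p.2 = ⊤ ∧ q.2 = ⊤ then ENNReal.ofReal |p.1 - q.1|
  else if p.2 = ⊤ ∨ q.2 = ⊤ then ⊤
  else ENNReal.ofReal (min (max |p.1 - q.1| |p.2.toReal - q.2.toReal|)
    (max ((p.2.toReal - p.1) / 2) ((q.2.toReal - q.1) / 2)))

def IsRepSeq {M : Type*} [TopologicalSpace M] (φ : M → ℝ) (a : ℕ → ℝ × EReal) : Prop :=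
  (∃ k : ℝ, a 0 = (k, ⊤) ∧ 0 < multInf φ k) ∧
  (∀ i : ℕ, 0 < i →
    (∃ x y : ℝ, a i = (x, (y : EReal)) ∧ x < y ∧ 0 < mult φ (x, y)) ∨
    (∃ x : ℝ, a i = (x, (x : EReal)))) ∧
  (∀ x y : ℝ, x < y → 0 < mult φ (x, y) →
    Set.ncard {i : ℕ | a i = (x, (y : EReal))} = (mult φ (x, y)).toNat) ∧
  {i : ℕ | ∃ x : ℝ, a i = (x, (x : EReal))}.Infinite

noncomputable def dMatchSeq (a b : ℕ → ℝ × EReal) : ℝ≥0∞ :=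
  ⨅ σ : {σ : ℕ → ℕ // Function.Bijective σ}, ⨆ i : ℕ, eDist (a i) (b (σ.1 i))

noncomputable def dMatch {M N : Type*} [TopologicalSpace M] [TopologicalSpace N]
    (φ : M → ℝ) (ψ : N → ℝ) : ℝ≥0∞ :=
  sInf {s : ℝ≥0∞ | ∃ a b, IsRepSeq φ a ∧ IsRepSeq ψ b ∧ s = dMatchSeq a b}

/-! Fix a birth value `s` and count the components of `{φ ≤ y}` on which the minimum of `φ` is
exactly `s`. As `y` grows such components can only merge, so the count is antitone in `y`; it is
also right-continuous, because in a compact Hausdorff space the component of a point in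
`{φ ≤ y} = ⋂ z > y, {φ ≤ z}` is the intersection of its components in the `{φ ≤ z}`. An antitone
right-continuous function with values in `ℕ` is the sum of its later jumps and its limit at
infinity, and here the jump at `t` is `mult φ (s, t)` while the limit is `multInf φ s`. Since every
component has a minimum, `rsf φ x y` is the sum of these counts over `s ≤ x`. -/

open Filter Function

section CardinalitiesAndSums

variable {α β γ : Type*}

lemma ncard_image_le_ncard_image {f : α → β} {g : α → γ} {s t : Set α} (hst : s ⊆ t)
    (ht : (f '' t).Finite) (hfg : ∀ a ∈ s, ∀ b ∈ s, f a = f b → g a = g b) :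
    (g '' s).ncard ≤ (f '' t).ncard := by
  rcases isEmpty_or_nonempty α with _ | _
  · simp [eq_empty_of_isEmpty s]
  refine ncard_le_ncard_of_injOn (f ∘ invFunOn g s) ?_ ?_ ht
  · intro c hc
    exact mem_image_of_mem f (hst (invFunOn_mem hc))
  · intro c hc d hd hcd
    rw [← invFunOn_eq hc, ← invFunOn_eq hd]
    exact hfg _ (invFunOn_mem hc) _ (invFunOn_mem hd) hcd

lemma finsum_mem_prod {M : Type*} [AddCommMonoid M] {s : Set α} {t : Set β} (f : α × β → M)
    (hf : (s ×ˢ t ∩ support f).Finite) :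
    ∑ᶠ p ∈ s ×ˢ t, f p = ∑ᶠ a ∈ s, ∑ᶠ b ∈ t, f (a, b) := by
  classical
  rw [← support_indicator] at hf
  rw [finsum_mem_def, finsum_curry _ hf]
  refine finsum_congr fun a ↦ ?_
  by_cases ha : a ∈ s <;> simp [ha, finsum_mem_def, indicator_apply]

end CardinalitiesAndSums

section Drops

/-- The size of the jump of an antitone function `g` at `t`: its left limit minus its value. -/
noncomputable def leftDrop (g : ℝ → ℕ) (t : ℝ) : ℤ := ((leftLim g t : ℕ) : ℤ) - g t

variable {g : ℝ → ℕ} {a b t : ℝ} {m : ℕ}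

lemma leftLim_eq_of_eqOn_Ioo (hbt : b < t) (hg : ∀ u ∈ Ioo b t, g u = m) : leftLim g t = m := by
  refine leftLim_eq_of_tendsto (tendsto_const_nhds.congr' ?_)
  filter_upwards [Ioo_mem_nhdsLT hbt] with u hu using (hg u hu).symm

lemma eventually_eq_leftLim (hbt : b < t) (hg : AntitoneOn g (Ioo b t)) :
    ∀ᶠ u in 𝓝[<] t, g u = leftLim g t := by
  have hlim := tendsto_leftLim_of_tendsto
    ⟨_, hg.tendsto_nhdsWithin_Ioo_left (nonempty_Ioo.2 hbt) (OrderBot.bddBelow _)⟩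
  rwa [nhds_discrete, tendsto_pure] at hlim

lemma leftLim_le_of_antitoneOn (hbt : b < t) (hg : AntitoneOn g (Ico b t)) :
    leftLim g t ≤ g b := by
  obtain ⟨u, hu, hbu⟩ := ((eventually_eq_leftLim hbt (hg.mono Ioo_subset_Ico_self)).and
    (Ioo_mem_nhdsLT hbt)).exists
  rw [← hu]
  exact hg (left_mem_Ico.2 hbt) (Ioo_subset_Ico_self hbu) hbu.1.le

lemma leftDrop_eq_zero_of_eqOn_Ioc (hbt : b < t) (hg : ∀ u ∈ Ioc b t, g u = m) :
    leftDrop g t = 0 := by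
  rw [leftDrop, leftLim_eq_of_eqOn_Ioo hbt fun u hu ↦ hg u (Ioo_subset_Ioc_self hu),
    hg t (right_mem_Ioc.2 hbt), sub_self]

lemma exists_first_drop (hr : ∀ t ∈ Ici a, ∀ᶠ u in 𝓝[>] t, g u = g t)
    (hne : ∃ t ∈ Ici a, g t ≠ g a) :
    ∃ c ∈ Ioi a, g c ≠ g a ∧ ∀ t ∈ Ico a c, g t = g a := by
  set A : Set ℝ := {t | t ∈ Ici a ∧ g t ≠ g a}
  have hA : BddBelow A := ⟨a, fun t ht ↦ ht.1⟩
  have hac : a ≤ sInf A := le_csInf hne fun t ht ↦ ht.1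
  have hbelow : ∀ t ∈ Ico a (sInf A), g t = g a := fun t ht ↦ by
    by_contra h
    exact notMem_of_lt_csInf ht.2 hA ⟨ht.1, h⟩
  have hc : g (sInf A) ≠ g a := fun heq ↦ by
    obtain ⟨d, hd, hcd⟩ := mem_nhdsGT_iff_exists_Ioo_subset.1 (hr _ hac)
    obtain ⟨t, htA, htd⟩ := exists_lt_of_csInf_lt hne hd
    rcases (csInf_le hA htA).eq_or_lt with h | h
    · exact htA.2 (h ▸ heq)
    · exact htA.2 ((hcd ⟨h, htd⟩).trans heq)
  exact ⟨sInf A, hac.lt_of_ne fun h ↦ hc (congrArg g h.symm), hc, hbelow⟩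

lemma Ioi_inter_support_leftDrop {c : ℝ} (hac : a < c)
    (hconst : ∀ t ∈ Ico a c, g t = g a) :
    Ioi a ∩ support (leftDrop g) = insert c (Ioi c) ∩ support (leftDrop g) := by
  ext t
  refine and_congr_left fun ht ↦ ⟨fun hat ↦ ?_, ?_⟩
  · refine (lt_trichotomy c t).elim .inr fun h ↦ h.elim (fun h ↦ .inl h.symm) fun htc ↦ ?_
    exact absurd
      (leftDrop_eq_zero_of_eqOn_Ioc hat fun u hu ↦ hconst u ⟨hu.1.le, hu.2.trans_lt htc⟩) ht
  · rintro (rfl | hct)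
    exacts [hac, hac.trans hct]

theorem eq_finsum_leftDrop_add_limit (hg : AntitoneOn g (Ici a))
    (hr : ∀ t ∈ Ici a, ∀ᶠ u in 𝓝[>] t, g u = g t) :
    (Ioi a ∩ support (leftDrop g)).Finite ∧
      ∃ L : ℕ, (∀ᶠ u in atTop, g u = L) ∧ (g a : ℤ) = ∑ᶠ t ∈ Ioi a, leftDrop g t + L := by
  induction hn : g a using Nat.strong_induction_on generalizing a with
  | _ n ih =>
  subst hn
  by_cases hconst : ∀ t ∈ Ici a, g t = g a
  · have hzero : ∀ t ∈ Ioi a, leftDrop g t = 0 := fun t ht ↦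
      leftDrop_eq_zero_of_eqOn_Ioc ht fun u hu ↦ hconst u hu.1.le
    refine ⟨?_, g a, (eventually_ge_atTop a).mono hconst, ?_⟩
    · exact finite_empty.subset fun t ht ↦ ht.2 (hzero t ht.1)
    · rw [finsum_mem_of_eqOn_zero hzero, zero_add]
  · push Not at hconst
    obtain ⟨c, hac, hc, hbefore⟩ := exists_first_drop hr hconst
    have hac' : Ici c ⊆ Ici a := Ici_subset_Ici.2 (le_of_lt hac)
    have hlt : g c < g a := (hg self_mem_Ici (hac' self_mem_Ici) (le_of_lt hac)).lt_of_ne hc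
    obtain ⟨hfin, L, hL, hsum⟩ := ih _ hlt (hg.mono hac') (fun t ht ↦ hr t (hac' ht)) rfl
    have hsupp := Ioi_inter_support_leftDrop hac hbefore
    refine ⟨?_, L, hL, ?_⟩
    · rw [hsupp]
      exact (hfin.insert c).subset fun t ⟨hct, ht⟩ ↦ hct.imp_right fun h ↦ ⟨h, ht⟩
    · have hdrop : leftDrop g c = (g a : ℤ) - g c := by
        rw [leftDrop, leftLim_eq_of_eqOn_Ioo hac fun u hu ↦ hbefore u (Ioo_subset_Ico_self hu)]
      rw [finsum_mem_inter_support_eq _ _ _ hsupp, finsum_mem_insert' _ self_notMem_Ioi hfin,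
        hdrop]
      linarith

end Drops

section ConnectedComponents

variable {X : Type*} [TopologicalSpace X] {F : Set X}

lemma isClosed_connectedComponentIn (hF : IsClosed F) (P : X) :
    IsClosed (connectedComponentIn F P) := by
  by_cases hP : P ∈ F
  · exact isClosed_of_closure_subset <|
      isPreconnected_connectedComponentIn.closure.subset_connectedComponentIn
        (subset_closure (mem_connectedComponentIn hP))
        (closure_minimal (connectedComponentIn_subset F P) hF)
  · rw [connectedComponentIn_eq_empty hP]
    exact isClosed_empty

lemma finite_image_connectedComponentIn [LocallyConnectedSpace X] {K : Set X} (hK : IsCompact K)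
    (hKF : ∀ P ∈ K, F ∈ 𝓝 P) : (connectedComponentIn F '' K).Finite := by
  obtain ⟨t, -, hcover⟩ := hK.elim_nhds_subcover (connectedComponentIn F) fun P hP ↦
    connectedComponentIn_mem_nhds (hKF P hP)
  refine (t.finite_toSet.image (connectedComponentIn F)).subset ?_
  rintro _ ⟨P, hP, rfl⟩
  obtain ⟨R, hR, hPR⟩ := mem_iUnion₂.1 (hcover hP)
  exact ⟨R, hR, connectedComponentIn_eq hPR⟩

variable [T2Space X] {ι : Type*} [Nonempty ι]

lemma isPreconnected_iInter_of_directed {V : ι → Set X} (hdir : Directed (· ⊇ ·) V)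
    (hV : ∀ i, IsCompact (V i)) (hconn : ∀ i, IsPreconnected (V i)) :
    IsPreconnected (⋂ i, V i) := by
  have hI : IsCompact (⋂ i, V i) := (hV (Classical.arbitrary ι)).of_isClosed_subset
    (isClosed_iInter fun i ↦ (hV i).isClosed) (iInter_subset V _)
  rw [isPreconnected_iff_subset_of_fully_disjoint_closed hI.isClosed]
  intro u v hu hv huv hdisj
  obtain ⟨U, W, hU, hW, huU, hvW, hUW⟩ := SeparatedNhds.of_isCompact_isCompact
    (hI.inter_right hu) (hI.inter_right hv) (hdisj.mono inter_subset_right inter_subset_right)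
  have hcover : ⋂ i, V i ⊆ U ∪ W := fun x hx ↦
    (huv hx).imp (fun h ↦ huU ⟨hx, h⟩) fun h ↦ hvW ⟨hx, h⟩
  obtain ⟨i, hi⟩ := exists_subset_nhds_of_isCompact hdir hV fun x hx ↦
    (hU.union hW).mem_nhds (hcover hx)
  refine ((hconn i).subset_or_subset hU hW hUW hi).imp (fun h x hx ↦ ?_) fun h x hx ↦ ?_
  · exact (huv hx).resolve_right fun hxv ↦
      disjoint_left.1 hUW (h (iInter_subset V i hx)) (hvW ⟨hx, hxv⟩)
  · exact (huv hx).resolve_left fun hxu ↦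
      disjoint_left.1 hUW (huU ⟨hx, hxu⟩) (h (iInter_subset V i hx))

lemma connectedComponentIn_iInter {V : ι → Set X} (hdir : Directed (· ⊇ ·) V)
    (hV : ∀ i, IsCompact (V i)) (P : X) :
    connectedComponentIn (⋂ i, V i) P = ⋂ i, connectedComponentIn (V i) P := by
  refine (subset_iInter fun i ↦ connectedComponentIn_mono P (iInter_subset V i)).antisymm ?_
  by_cases hP : ∀ i, P ∈ V i
  · have hpre : IsPreconnected (⋂ i, connectedComponentIn (V i) P) :=
      isPreconnected_iInter_of_directed (fun i j ↦
          let ⟨k, hik, hjk⟩ := hdir i j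
          ⟨k, connectedComponentIn_mono P hik, connectedComponentIn_mono P hjk⟩)
        (fun i ↦ (hV i).of_isClosed_subset (isClosed_connectedComponentIn (hV i).isClosed P)
          (connectedComponentIn_subset _ P)) fun i ↦ isPreconnected_connectedComponentIn
    exact hpre.subset_connectedComponentIn
      (mem_iInter.2 fun i ↦ mem_connectedComponentIn (hP i))
      (iInter_mono fun i ↦ connectedComponentIn_subset _ P)
  · obtain ⟨i, hi⟩ := not_forall.1 hP
    exact (iInter_subset _ i).trans <|
      (connectedComponentIn_eq_empty hi).subset.trans (empty_subset _)

end ConnectedComponents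

section Births

variable {M : Type*} [TopologicalSpace M] {φ : M → ℝ} {I J : Set ℝ} {P Q : M} {s t x y z : ℝ}

/-- The connected component of `P` in the sublevel set `{φ ≤ y}`, empty if `y < φ P`. -/
def sublevelComponent (φ : M → ℝ) (y : ℝ) (P : M) : Set M := connectedComponentIn {Q | φ Q ≤ y} P

/-- The points of `{φ ≤ y}` at which `φ` is minimal on their component. The value of `φ` at such a
point is the birth value of the component: the level at which it first appears. -/
def birthPoints (φ : M → ℝ) (y : ℝ) : Set M :=
  {P | φ P ≤ y ∧ IsMinOn φ (sublevelComponent φ y P) P}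

/-- The components of `{φ ≤ y}` whose birth value lies in `I`. -/
def componentsBornIn (φ : M → ℝ) (I : Set ℝ) (y : ℝ) : Set (Set M) :=
  sublevelComponent φ y '' (birthPoints φ y ∩ φ ⁻¹' I)

/-- The number of components of `{φ ≤ y}` whose birth value lies in `I`, with value `0` if there are
infinitely many. -/
noncomputable def birthCount (φ : M → ℝ) (I : Set ℝ) (y : ℝ) : ℕ := (componentsBornIn φ I y).ncard

lemma mem_sublevelComponent_self (hP : φ P ≤ y) : P ∈ sublevelComponent φ y P :=
  mem_connectedComponentIn hP

lemma sublevelComponent_mono (hyz : y ≤ z) : sublevelComponent φ y P ⊆ sublevelComponent φ z P :=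
  connectedComponentIn_mono P fun _ hQ ↦ le_trans hQ hyz

lemma sublevelComponent_eq_of_le (hyz : y ≤ z) (hP : φ P ≤ y)
    (h : sublevelComponent φ y P = sublevelComponent φ y Q) :
    sublevelComponent φ z P = sublevelComponent φ z Q :=
  (connectedComponentIn_eq (sublevelComponent_mono hyz (h ▸ mem_sublevelComponent_self hP))).symm

lemma birthPoints_inter_antitone (hI : I ⊆ Iic y) (hyz : y ≤ z) :
    birthPoints φ z ∩ φ ⁻¹' I ⊆ birthPoints φ y ∩ φ ⁻¹' I :=
  fun _ hP ↦ ⟨⟨hI hP.2, hP.1.2.on_subset (sublevelComponent_mono hyz)⟩, hP.2⟩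

lemma birthPoints_apply_eq (hP : P ∈ birthPoints φ y) (hQ : Q ∈ birthPoints φ y)
    (h : sublevelComponent φ y P = sublevelComponent φ y Q) : φ P = φ Q :=
  le_antisymm (hP.2 (h ▸ mem_sublevelComponent_self hQ.1))
    (hQ.2 (h ▸ mem_sublevelComponent_self hP.1))

lemma disjoint_componentsBornIn (hIJ : Disjoint I J) :
    Disjoint (componentsBornIn φ I y) (componentsBornIn φ J y) := by
  rw [disjoint_left]
  rintro _ ⟨P, ⟨hP, hPI⟩, rfl⟩ ⟨Q, ⟨hQ, hQJ⟩, hPQ⟩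
  exact disjoint_left.1 hIJ hPI (by rwa [mem_preimage, birthPoints_apply_eq hQ hP hPQ] at hQJ)

lemma support_birthCount_singleton_subset :
    support (fun s ↦ birthCount φ {s} y) ⊆ φ '' birthPoints φ y := fun _ hs ↦ by
  obtain ⟨_, P, hP, rfl⟩ := nonempty_of_ncard_ne_zero hs
  exact ⟨P, hP⟩

section LocallyConnected

variable [CompactSpace M] [LocallyConnectedSpace M]

lemma finite_image_sublevelComponent (hφ : Continuous φ) (hxy : x < y) :
    (sublevelComponent φ y '' {P | φ P ≤ x}).Finite :=
  finite_image_connectedComponentIn (isClosed_le hφ continuous_const).isCompact fun _ hP ↦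
    hφ.continuousAt.eventually_le_const (lt_of_le_of_lt hP hxy)

lemma finite_componentsBornIn (hφ : Continuous φ) (hI : I ⊆ Iic x) (hxy : x < y) :
    (componentsBornIn φ I y).Finite :=
  (finite_image_sublevelComponent hφ hxy).subset (image_mono fun _ hP ↦ hI hP.2)

lemma finite_birthValues (hφ : Continuous φ) (hxy : x < y) :
    (φ '' birthPoints φ y ∩ Iic x).Finite := by
  refine ((finite_componentsBornIn hφ subset_rfl hxy).image fun C ↦ sInf (φ '' C)).subset ?_
  rintro _ ⟨⟨P, hP, rfl⟩, hPx⟩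
  refine ⟨_, ⟨P, ⟨hP, hPx⟩, rfl⟩, IsLeast.csInf_eq ⟨?_, forall_mem_image.2 hP.2⟩⟩
  exact mem_image_of_mem φ (mem_sublevelComponent_self hP.1)

lemma birthCount_antitoneOn (hφ : Continuous φ) (hI : I ⊆ Iic x) :
    AntitoneOn (birthCount φ I) (Ioi x) := fun _ hy _ _ hyz ↦
  ncard_image_le_ncard_image
    (birthPoints_inter_antitone (hI.trans (Iic_subset_Iic.2 (le_of_lt hy))) hyz)
    (finite_componentsBornIn hφ hI hy)
    fun _ hP _ _ h ↦ sublevelComponent_eq_of_le hyz ((hI hP.2).trans (le_of_lt hy)) h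

lemma birthCount_union (hφ : Continuous φ) (hI : I ⊆ Iic x) (hJ : J ⊆ Iic x) (hxy : x < y)
    (hIJ : Disjoint I J) : birthCount φ (I ∪ J) y = birthCount φ I y + birthCount φ J y := by
  rw [birthCount, componentsBornIn, preimage_union, inter_union_distrib_left, image_union]
  exact ncard_union_eq (disjoint_componentsBornIn hIJ) (finite_componentsBornIn hφ hI hxy)
    (finite_componentsBornIn hφ hJ hxy)

lemma birthCount_sub_le_birthCount_sub (hφ : Continuous φ) (hJI : J ⊆ I) (hI : I ⊆ Iic x)
    (hxy : x < y) (hyz : y ≤ z) :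
    (birthCount φ J y : ℤ) - birthCount φ J z ≤ (birthCount φ I y : ℤ) - birthCount φ I z := by
  have hrest : birthCount φ (I \ J) z ≤ birthCount φ (I \ J) y :=
    birthCount_antitoneOn hφ (sdiff_subset.trans hI) hxy (hxy.trans_le hyz) hyz
  have hsplit : ∀ w, x < w → birthCount φ I w = birthCount φ J w + birthCount φ (I \ J) w :=
    fun w hw ↦ by
      rw [← birthCount_union hφ (hJI.trans hI) (sdiff_subset.trans hI) hw disjoint_sdiff_right,
        union_sdiff_cancel hJI]
  have := hsplit y hxy
  have := hsplit z (hxy.trans_le hyz)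
  lia

lemma birthCount_Iic_eq_finsum (hφ : Continuous φ) (hxy : x < y) :
    birthCount φ (Iic x) y = ∑ᶠ s ∈ Iic x, birthCount φ {s} y := by
  have hcover : componentsBornIn φ (Iic x) y =
      ⋃ s ∈ φ '' birthPoints φ y ∩ Iic x, componentsBornIn φ {s} y := by
    ext C
    simp only [mem_iUnion]
    constructor
    · rintro ⟨P, ⟨hP, hPx⟩, rfl⟩
      exact ⟨φ P, ⟨mem_image_of_mem φ hP, hPx⟩, P, ⟨hP, rfl⟩, rfl⟩
    · rintro ⟨s, hs, P, ⟨hP, rfl⟩, rfl⟩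
      exact ⟨P, ⟨hP, hs.2⟩, rfl⟩
  rw [birthCount, hcover, (finite_birthValues hφ hxy).ncard_biUnion
    (fun s hs ↦ finite_componentsBornIn hφ (singleton_subset_iff.2 hs.2) hxy)
    fun s _ t _ hst ↦ disjoint_componentsBornIn (disjoint_singleton.2 hst)]
  have hsupp : φ '' birthPoints φ y ∩ Iic x ∩ support (fun s ↦ birthCount φ {s} y) =
      Iic x ∩ support fun s ↦ birthCount φ {s} y := by
    rw [inter_comm (φ '' _), inter_assoc, inter_eq_right.2 support_birthCount_singleton_subset]
  exact finsum_mem_inter_support_eq _ _ _ hsupp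

end LocallyConnected

lemma rsf_eq_ncard_image : rsf φ x y = (sublevelComponent φ y '' {P | φ P ≤ x}).ncard := by
  simp only [rsf, image, sublevelComponent, mem_ofPred_eq, eq_comm]

variable [CompactSpace M]

lemma exists_birthPoint (hφ : Continuous φ) (hP : φ P ≤ y) :
    ∃ Q ∈ birthPoints φ y, φ Q ≤ φ P ∧ sublevelComponent φ y Q = sublevelComponent φ y P := by
  obtain ⟨Q, hQ, hmin⟩ := (isClosed_connectedComponentIn (isClosed_le hφ continuous_const)
    P).isCompact.exists_isMinOn ⟨P, mem_sublevelComponent_self hP⟩ hφ.continuousOn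
  have hPQ : sublevelComponent φ y P = sublevelComponent φ y Q := connectedComponentIn_eq hQ
  have hQP : φ Q ≤ φ P := hmin (mem_sublevelComponent_self hP)
  exact ⟨Q, ⟨hQP.trans hP, hPQ ▸ hmin⟩, hQP, hPQ.symm⟩

lemma rsf_eq_birthCount (hφ : Continuous φ) (hxy : x < y) :
    rsf φ x y = birthCount φ (Iic x) y := by
  rw [rsf_eq_ncard_image, birthCount]
  congr 1
  refine Subset.antisymm ?_ (image_mono inter_subset_right)
  rintro _ ⟨P, hP, rfl⟩
  obtain ⟨Q, hQ, hQP, hcomp⟩ := exists_birthPoint hφ (le_trans hP hxy.le)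
  exact ⟨Q, ⟨hQ, hQP.trans hP⟩, hcomp⟩

lemma sublevelComponent_eq_iInter [T2Space M] (hφ : Continuous φ) (y : ℝ) (P : M) :
    sublevelComponent φ y P = ⋂ z : Ioi y, sublevelComponent φ z P := by
  have hsublevel : {Q | φ Q ≤ y} = ⋂ z : Ioi y, {Q | φ Q ≤ z} := by
    ext Q
    simp only [mem_ofPred_eq, mem_iInter, Subtype.forall, mem_Ioi]
    exact forall_gt_imp_ge_iff_le_of_dense.symm
  rw [sublevelComponent, hsublevel]
  refine connectedComponentIn_iInter (directed_of_isDirected_ge fun z w hzw Q hQ ↦ ?_)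
    (fun z ↦ (isClosed_le hφ continuous_const).isCompact) P
  exact le_trans (show φ Q ≤ z from hQ) hzw

lemma eventually_sublevelComponent_ne [T2Space M] (hφ : Continuous φ) (hP : φ P ≤ y)
    (hPQ : sublevelComponent φ y P ≠ sublevelComponent φ y Q) :
    ∀ᶠ z in 𝓝[>] y, sublevelComponent φ z P ≠ sublevelComponent φ z Q := by
  obtain ⟨z, hyz, hne⟩ : ∃ z ∈ Ioi y, sublevelComponent φ z P ≠ sublevelComponent φ z Q := by
    by_contra! h
    refine hPQ ?_
    rw [sublevelComponent_eq_iInter hφ, sublevelComponent_eq_iInter hφ]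
    exact iInter_congr fun z ↦ h z z.2
  filter_upwards [Ioc_mem_nhdsGT hyz] with w hw h
  exact hne (sublevelComponent_eq_of_le hw.2 (hP.trans hw.1.le) h)

variable [LocallyConnectedSpace M]

lemma rsf_sub_rsf (hφ : Continuous φ) (hst : s ≤ t) (hty : t < y) :
    (rsf φ t y : ℤ) - rsf φ s y = birthCount φ (Ioc s t) y := by
  rw [rsf_eq_birthCount hφ hty, rsf_eq_birthCount hφ (hst.trans_lt hty), ← Iic_union_Ioc_eq_Iic hst,
    birthCount_union hφ (Iic_subset_Iic.2 hst) Ioc_subset_Iic_self hty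
      (Iic_disjoint_Ioc le_rfl)]
  push_cast
  ring

lemma eventually_rsf_eq [T2Space M] (hφ : Continuous φ) (hxy : x < y) :
    ∀ᶠ z in 𝓝[>] y, rsf φ x z = rsf φ x y := by
  obtain ⟨S, hS, hbij⟩ := (surjOn_image (sublevelComponent φ y) {P | φ P ≤ x}).exists_bijOn_subset
  have hfin : S.Finite := hbij.finite_iff_finite.2 (finite_image_sublevelComponent hφ hxy)
  have hinj : ∀ᶠ z in 𝓝[>] y, ∀ P ∈ S, ∀ Q ∈ S, P ≠ Q →
      sublevelComponent φ z P ≠ sublevelComponent φ z Q := by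
    refine hfin.eventually_all.2 fun P hP ↦ hfin.eventually_all.2 fun Q hQ ↦ ?_
    by_cases hPQ : P = Q
    · simp [hPQ]
    · exact (eventually_sublevelComponent_ne hφ (le_trans (hS hP) hxy.le)
        (hbij.injOn.ne hP hQ hPQ)).mono fun _ h _ ↦ h
  filter_upwards [hinj, self_mem_nhdsWithin] with z hz hyz
  refine le_antisymm ?_ ?_
  · rw [rsf_eq_birthCount hφ hxy, rsf_eq_birthCount hφ (hxy.trans hyz)]
    exact birthCount_antitoneOn hφ subset_rfl hxy (hxy.trans hyz) (le_of_lt hyz)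
  · have hinjOn : InjOn (sublevelComponent φ z) S := fun P hP Q hQ h ↦ by
      by_contra hPQ
      exact hz P hP Q hQ hPQ h
    calc rsf φ x y = (sublevelComponent φ y '' S).ncard := by
          rw [rsf_eq_ncard_image, hbij.image_eq]
      _ = (sublevelComponent φ z '' S).ncard := by
          rw [hbij.injOn.ncard_image, hinjOn.ncard_image]
      _ ≤ rsf φ x z := by
          rw [rsf_eq_ncard_image]
          exact ncard_le_ncard (image_mono hS) (finite_image_sublevelComponent hφ (hxy.trans hyz))

lemma eventually_birthCount_Ioc_eq (hφ : Continuous φ) (hsy : s < y) :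
    ∀ᶠ ε in 𝓝[>] (0 : ℝ), s + ε < y ∧
      ∀ z, y ≤ z → birthCount φ (Ioc (s - ε) (s + ε)) z = birthCount φ {s} z := by
  obtain ⟨x, hsx, hxy⟩ := exists_between hsy
  have hisolated : ∀ᶠ t in 𝓝 s, t < x ∧ t ∉ (φ '' birthPoints φ y ∩ Iic x) \ {s} :=
    (eventually_lt_nhds hsx).and <| ((finite_birthValues hφ hxy).sdiff
      (t := {s})).isClosed.isOpen_compl.mem_nhds fun h ↦ h.2 rfl
  obtain ⟨δ, hδ, hball⟩ := Metric.eventually_nhds_iff_ball.1 hisolated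
  filter_upwards [Ioo_mem_nhdsGT hδ] with ε hε
  have hnear : Icc (s - ε) (s + ε) ⊆ Metric.ball s δ := by
    rw [← Real.closedBall_eq_Icc]
    exact Metric.closedBall_subset_ball hε.2
  have hlt : ∀ t ∈ Icc (s - ε) (s + ε), t < x := fun t ht ↦ (hball t (hnear ht)).1
  refine ⟨(hlt _ ⟨by linarith [hε.1], le_rfl⟩).trans hxy, fun z hyz ↦ ?_⟩
  rw [birthCount, birthCount, componentsBornIn, componentsBornIn]
  congr 2
  ext P
  refine and_congr_right fun hP ↦ ⟨fun hPs ↦ ?_, ?_⟩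
  · by_contra hne
    have hPx := hlt _ (Ioc_subset_Icc_self hPs)
    have hPy := birthPoints_inter_antitone (Iic_subset_Iic.2 hxy.le) hyz ⟨hP, hPx.le⟩
    exact (hball _ (hnear (Ioc_subset_Icc_self hPs))).2
      ⟨⟨mem_image_of_mem φ hPy.1, hPx.le⟩, hne⟩
  · rintro (rfl : φ P = s)
    exact ⟨by linarith [hε.1], by linarith [hε.1]⟩

lemma eventually_birthCount_singleton_eq [T2Space M] (hφ : Continuous φ) (hst : s < t) :
    ∀ᶠ u in 𝓝[>] t, birthCount φ {s} u = birthCount φ {s} t := by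
  obtain ⟨ε, ⟨hsε, hcount⟩, hε : 0 < ε⟩ :=
    ((eventually_birthCount_Ioc_eq hφ hst).and self_mem_nhdsWithin).exists
  have hsε' : s - ε ≤ s + ε := by linarith
  filter_upwards [eventually_rsf_eq hφ hsε, eventually_rsf_eq hφ (hsε'.trans_lt hsε),
    self_mem_nhdsWithin] with u hright hleft htu
  have ht := rsf_sub_rsf hφ hsε' hsε
  have hu := rsf_sub_rsf hφ hsε' (hsε.trans htu)
  rw [hcount _ le_rfl] at ht
  rw [hcount _ (le_of_lt htu)] at hu
  lia

end Births

section Multiplicities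

variable {M : Type*} [TopologicalSpace M] [CompactSpace M] [LocallyConnectedSpace M] {φ : M → ℝ}
  {s t x y ε : ℝ}

lemma birthCount_singleton_antitoneOn (hφ : Continuous φ) (s : ℝ) :
    AntitoneOn (birthCount φ {s}) (Ioi s) :=
  birthCount_antitoneOn hφ (singleton_subset_iff.2 self_mem_Iic)

lemma leftDrop_le_birthCount_sub (hφ : Continuous φ) (hε : 0 < ε) (hεt : s + ε < t - ε) :
    leftDrop (birthCount φ {s}) t ≤
      (birthCount φ (Ioc (s - ε) (s + ε)) (t - ε) : ℤ)
        - birthCount φ (Ioc (s - ε) (s + ε)) (t + ε) := by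
  have hanti := birthCount_singleton_antitoneOn hφ s
  have hst : s < t := by linarith
  calc leftDrop (birthCount φ {s}) t
      ≤ (birthCount φ {s} (t - ε) : ℤ) - birthCount φ {s} (t + ε) := by
        have hleft : leftLim (birthCount φ {s}) t ≤ birthCount φ {s} (t - ε) :=
          leftLim_le_of_antitoneOn (by linarith) <|
            hanti.mono fun u hu ↦ lt_of_lt_of_le (by linarith) hu.1
        have hright : birthCount φ {s} (t + ε) ≤ birthCount φ {s} t :=
          hanti hst (hst.trans (by linarith)) (by linarith)
        rw [leftDrop]
        lia
    _ ≤ _ := birthCount_sub_le_birthCount_sub hφ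
        (singleton_subset_iff.2 (mem_Ioc.2 ⟨by linarith, by linarith⟩))
        Ioc_subset_Iic_self hεt (by linarith)

lemma exists_birthCount_sub_eq_leftDrop [T2Space M] (hφ : Continuous φ) (hst : s < t) :
    ∃ ε, 0 < ε ∧ s + ε < t - ε ∧
      (birthCount φ (Ioc (s - ε) (s + ε)) (t - ε) : ℤ)
        - birthCount φ (Ioc (s - ε) (s + ε)) (t + ε) = leftDrop (birthCount φ {s}) t := by
  obtain ⟨y, hsy, hyt⟩ := exists_between hst
  have hlim_left : Tendsto (fun ε ↦ t - ε) (𝓝[>] 0) (𝓝[<] t) := by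
    simpa using ((continuous_sub_left t).continuousWithinAt (x := 0)).tendsto_nhdsWithin
      fun ε (hε : ε ∈ Ioi 0) ↦ mem_Iio.2 (sub_lt_self t hε)
  have hlim_right : Tendsto (fun ε ↦ t + ε) (𝓝[>] 0) (𝓝[>] t) := by
    simpa using ((continuous_const_add t).continuousWithinAt (x := 0)).tendsto_nhdsWithin
      fun ε (hε : ε ∈ Ioi 0) ↦ mem_Ioi.2 (lt_add_of_pos_right t hε)
  have hbefore := hlim_left.eventually <| (eventually_eq_leftLim hst
    ((birthCount_singleton_antitoneOn hφ s).mono Ioo_subset_Ioi_self)).and (Ioo_mem_nhdsLT hyt)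
  have hafter := hlim_right.eventually (eventually_birthCount_singleton_eq hφ hst)
  obtain ⟨ε, ⟨hsε, hcount⟩, ⟨hleft, hyε, -⟩, hright, hε : 0 < ε⟩ :=
    ((eventually_birthCount_Ioc_eq hφ hsy).and
      (hbefore.and (hafter.and self_mem_nhdsWithin))).exists
  refine ⟨ε, hε, hsε.trans hyε, ?_⟩
  rw [hcount _ hyε.le, hcount _ (by linarith), hleft, hright, leftDrop]

lemma mult_eq_leftDrop [T2Space M] (hφ : Continuous φ) (hst : s < t) :
    mult φ (s, t) = leftDrop (birthCount φ {s}) t := by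
  have hvalue : ∀ ε, 0 < ε → s + ε < t - ε →
      (rsf φ (s + ε) (t - ε) : ℤ) - rsf φ (s - ε) (t - ε) - rsf φ (s + ε) (t + ε)
        + rsf φ (s - ε) (t + ε) =
      birthCount φ (Ioc (s - ε) (s + ε)) (t - ε)
        - birthCount φ (Ioc (s - ε) (s + ε)) (t + ε) := fun ε hε hεt ↦ by
    rw [← rsf_sub_rsf hφ (by linarith) hεt, ← rsf_sub_rsf hφ (by linarith) (by linarith)]
    ring
  refine IsLeast.csInf_eq ⟨?_, ?_⟩
  · obtain ⟨ε, hε, hεt, hdrop⟩ := exists_birthCount_sub_eq_leftDrop hφ hst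
    exact ⟨ε, hε, hεt, by rw [hvalue ε hε hεt, hdrop]⟩
  · rintro _ ⟨ε, hε, hεt, rfl⟩
    rw [hvalue ε hε hεt]
    exact leftDrop_le_birthCount_sub hφ hε hεt

lemma multInf_eq_of_eventually_eq (hφ : Continuous φ) {L : ℕ}
    (hL : ∀ᶠ y in atTop, birthCount φ {s} y = L) : multInf φ s = L := by
  have hvalue : ∀ ε, 0 < ε → s + ε < 1 / ε → (rsf φ (s + ε) (1 / ε) : ℤ) - rsf φ (s - ε) (1 / ε) =
      birthCount φ (Ioc (s - ε) (s + ε)) (1 / ε) := fun ε hε hεs ↦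
    rsf_sub_rsf hφ (by linarith) hεs
  refine IsLeast.csInf_eq ⟨?_, ?_⟩
  · have hlim : Tendsto (fun ε : ℝ ↦ 1 / ε) (𝓝[>] 0) atTop := by
      simpa only [one_div] using tendsto_inv_nhdsGT_zero
    obtain ⟨ε, ⟨hsε, hcount⟩, ⟨hεL, hsε'⟩, hε : 0 < ε⟩ :=
      ((eventually_birthCount_Ioc_eq hφ (lt_add_one s)).and
        ((hlim.eventually (hL.and (eventually_ge_atTop (s + 1)))).and self_mem_nhdsWithin)).exists
    exact ⟨ε, hε, hsε.trans_le hsε', by rw [hvalue ε hε (hsε.trans_le hsε'), hcount _ hsε', hεL]⟩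
  · rintro _ ⟨ε, hε, hεs, rfl⟩
    rw [hvalue ε hε hεs]
    obtain ⟨z, hz, hεz⟩ := (hL.and (eventually_ge_atTop (1 / ε))).exists
    have hsz : s < 1 / ε := by linarith
    calc (L : ℤ) = birthCount φ {s} z := by rw [hz]
      _ ≤ birthCount φ {s} (1 / ε) := mod_cast
          birthCount_singleton_antitoneOn hφ s hsz (hsz.trans_le hεz) hεz
      _ ≤ birthCount φ (Ioc (s - ε) (s + ε)) (1 / ε) := mod_cast
          ncard_le_ncard (image_mono (inter_subset_inter_right _ (preimage_mono
            (singleton_subset_iff.2 ⟨by linarith, by linarith⟩))))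
            (finite_componentsBornIn hφ Ioc_subset_Iic_self hεs)

lemma birthCount_singleton_eq_zero (hφ : Continuous φ) (hsy : s < y)
    (hs : s ∉ φ '' birthPoints φ y) {z : ℝ} (hyz : y ≤ z) : birthCount φ {s} z = 0 := by
  have hy : birthCount φ {s} y = 0 :=
    notMem_support.1 fun h ↦ hs (support_birthCount_singleton_subset h)
  exact Nat.le_zero.1 (hy ▸ birthCount_singleton_antitoneOn hφ s hsy (hsy.trans_le hyz) hyz)

lemma finite_inter_support_multInf (hφ : Continuous φ) (hxy : x < y) :
    (Iic x ∩ support (multInf φ)).Finite := by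
  refine (finite_birthValues hφ hxy).subset fun s ⟨hsx, hs⟩ ↦ ⟨?_, hsx⟩
  by_contra hbirth
  refine hs ((multInf_eq_of_eventually_eq hφ (L := 0) ?_).trans Nat.cast_zero)
  filter_upwards [eventually_ge_atTop y] with z hz using
    birthCount_singleton_eq_zero hφ (lt_of_le_of_lt hsx hxy) hbirth hz

variable [T2Space M]

lemma birthCount_singleton_eq_finsum_mult_add_multInf (hφ : Continuous φ) (hsy : s < y) :
    (Ioi y ∩ support fun t ↦ mult φ (s, t)).Finite ∧
      (birthCount φ {s} y : ℤ) = ∑ᶠ t ∈ Ioi y, mult φ (s, t) + multInf φ s := by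
  obtain ⟨hfin, L, hL, hsum⟩ := eq_finsum_leftDrop_add_limit
    ((birthCount_singleton_antitoneOn hφ s).mono (Ici_subset_Ioi.2 hsy))
    fun t ht ↦ eventually_birthCount_singleton_eq hφ (hsy.trans_le ht)
  have hmult : ∀ t ∈ Ioi y, mult φ (s, t) = leftDrop (birthCount φ {s}) t := fun t ht ↦
    mult_eq_leftDrop hφ (hsy.trans ht)
  refine ⟨hfin.subset fun t ht ↦ ⟨ht.1, (hmult t ht.1).symm.trans_ne ht.2⟩, ?_⟩
  rw [hsum, finsum_mem_congr rfl hmult, multInf_eq_of_eventually_eq hφ hL]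

lemma finite_inter_support_mult (hφ : Continuous φ) (hxy : x < y) :
    (Iic x ×ˢ Ioi y ∩ support (mult φ)).Finite := by
  refine ((finite_birthValues hφ hxy).biUnion fun s hs ↦
    (birthCount_singleton_eq_finsum_mult_add_multInf hφ (lt_of_le_of_lt hs.2 hxy)).1.image
      fun t ↦ (s, t)).subset ?_
  rintro ⟨s, t⟩ ⟨⟨hsx : s ≤ x, hyt : y < t⟩, hst⟩
  refine mem_iUnion₂.2 ⟨s, ⟨?_, hsx⟩, t, ⟨hyt, hst⟩, rfl⟩
  have hsy : s < y := lt_of_le_of_lt hsx hxy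
  by_contra hbirth
  refine hst ((mult_eq_leftDrop hφ (hsy.trans hyt)).trans ?_)
  exact leftDrop_eq_zero_of_eqOn_Ioc hyt fun u hu ↦
    birthCount_singleton_eq_zero hφ hsy hbirth hu.1.le

lemma rsf_eq_finsum_mult_add_finsum_multInf (hφ : Continuous φ) (hxy : x < y) :
    (rsf φ x y : ℤ) = ∑ᶠ p ∈ Iic x ×ˢ Ioi y, mult φ p + ∑ᶠ s ∈ Iic x, multInf φ s := by
  have hmult := finite_inter_support_mult hφ hxy
  have hinner : (Iic x ∩ support fun s ↦ ∑ᶠ t ∈ Ioi y, mult φ (s, t)).Finite := by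
    refine (hmult.image Prod.fst).subset fun s ⟨hsx, hs⟩ ↦ ?_
    obtain ⟨t, hyt, ht⟩ := exists_ne_zero_of_finsum_mem_ne_zero hs
    exact ⟨(s, t), ⟨⟨hsx, hyt⟩, ht⟩, rfl⟩
  calc (rsf φ x y : ℤ) = ∑ᶠ s ∈ Iic x, (birthCount φ {s} y : ℤ) := by
        rw [rsf_eq_birthCount hφ hxy, birthCount_Iic_eq_finsum hφ hxy]
        exact (Nat.castAddMonoidHom ℤ).map_finsum_mem' <| (finite_birthValues hφ hxy).subset
          fun s ⟨hsx, hs⟩ ↦ ⟨support_birthCount_singleton_subset hs, hsx⟩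
    _ = ∑ᶠ s ∈ Iic x, (∑ᶠ t ∈ Ioi y, mult φ (s, t) + multInf φ s) :=
        finsum_mem_congr rfl fun s hs ↦
          (birthCount_singleton_eq_finsum_mult_add_multInf hφ (lt_of_le_of_lt hs hxy)).2
    _ = ∑ᶠ s ∈ Iic x, ∑ᶠ t ∈ Ioi y, mult φ (s, t) + ∑ᶠ s ∈ Iic x, multInf φ s :=
        finsum_mem_add_distrib' hinner (finite_inter_support_multInf hφ hxy)
    _ = _ := by rw [finsum_mem_prod _ hmult]

end Multiplicities

theorem representation_theorem_general {M : Type*} [TopologicalSpace M] [CompactSpace M]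
    [LocallyConnectedSpace M] [T2Space M] {φ : M → ℝ} (hφ : Continuous φ) (xb yb : ℝ)
    (hxy : xb < yb) :
    {p : ℝ × ℝ | p.1 < p.2 ∧ p.1 ≤ xb ∧ yb < p.2 ∧ mult φ p ≠ 0}.Finite ∧
    {k : ℝ | k ≤ xb ∧ multInf φ k ≠ 0}.Finite ∧
    (rsf φ xb yb : ℤ) =
      (∑ᶠ p ∈ {p : ℝ × ℝ | p.1 < p.2 ∧ p.1 ≤ xb ∧ yb < p.2}, mult φ p) +
      ∑ᶠ k ∈ {k : ℝ | k ≤ xb}, multInf φ k := by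
  have hquadrant : {p : ℝ × ℝ | p.1 < p.2 ∧ p.1 ≤ xb ∧ yb < p.2} = Iic xb ×ˢ Ioi yb := by
    ext p
    exact and_iff_right_of_imp fun ⟨hx, hy⟩ ↦ (lt_of_le_of_lt hx hxy).trans hy
  refine ⟨?_, finite_inter_support_multInf hφ hxy, ?_⟩
  · exact (finite_inter_support_mult hφ hxy).subset fun p hp ↦ ⟨⟨hp.2.1, hp.2.2.1⟩, hp.2.2.2⟩
  · rw [hquadrant]
    exact rsf_eq_finsum_mult_add_finsum_multInf hφ hxy

theorem representation_theorem
    {M : Type*} [TopologicalSpace M] [CompactSpace M] [ConnectedSpace M] [LocallyConnectedSpace M] [T2Space M] {φ : M → ℝ} (hφ : Continuous φ)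
    (xb yb : ℝ) (hxy : xb < yb) :
    {p : ℝ × ℝ | p.1 < p.2 ∧ p.1 ≤ xb ∧ yb < p.2 ∧ mult φ p ≠ 0}.Finite ∧
    {k : ℝ | k ≤ xb ∧ multInf φ k ≠ 0}.Finite ∧
    (rsf φ xb yb : ℤ) =
      (∑ᶠ p ∈ {p : ℝ × ℝ | p.1 < p.2 ∧ p.1 ≤ xb ∧ yb < p.2}, mult φ p) +
      ∑ᶠ k ∈ {k : ℝ | k ≤ xb}, multInf φ k := by
  exact representation_theorem_general hφ xb yb hxy
end

section
/- Matching Stability Theorem: Let (M,φ) be a size pair, ε ≥ 0, and ψ : M → ℝ continuous with max_{P∈M} |φ(P) − ψ(P)| ≤ ε. Then the matching distance between ℓ*_{(M,φ)} and ℓ*_{(M,ψ)} satisfies d_match(ℓ*_{(M,φ)}, ℓ*_{(M,ψ)}) ≤ ε. -/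
open Set Topology
open scoped ENNReal

/-!
Put `β = ψ - ε`, so that `β ≤ φ ≤ β + 2ε`. The rank function of the inclusions `{φ ≤ x} ⊆ {β ≤ y}`
interpolates between those of `φ` and of `β`. Relative to `φ` it makes every bar die earlier by at
most `2ε` without moving its birth, and relative to `β` it makes every bar be born later by at most
`2ε` without moving its death. In the first comparison, listing the bars with a given birth in order
of length turns inequalities of ranks into an injection of barcodes that misses only bars of length
at most `2ε`; the second becomes the first upon reversing time. Through the intermediate barcode,
the remaining bars of `φ` are thus matched with those of `β`, with births and deaths both displaced
by an amount in `[0, 2ε]`, and replacing `β` by `ψ = β + ε` centers this interval at `0`.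
The cornerpoints at infinity lie over the minima of `φ` and `ψ`.
-/

/-! ### Rank functions and barcodes -/

theorem eventually_eq_sInf_image_Ioo {α : Type*} [LinearOrder α] [TopologicalSpace α]
    [OrderTopology α] [DenselyOrdered α] {f : α → ℤ} {a b : α} (hab : a < b)
    (hf : MonotoneOn f (Ioo a b)) (hbdd : BddBelow (f '' Ioo a b)) :
    ∀ᶠ x in 𝓝[>] a, f x = sInf (f '' Ioo a b) := by
  simpa only [nhds_discrete, Filter.tendsto_pure] using
    hf.tendsto_nhdsWithin_Ioo_right (nonempty_Ioo.2 hab) hbdd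

/-- The alternating sum of `R` over the corners of the rectangle `[x₁, x₂] × [y₁, y₂]`. When
`R x y` counts the bars born by `x` and alive at `y`, it counts the bars born in `(x₁, x₂]` that are
alive at `y₁` and dead at `y₂`. -/
def boxSum (R : ℝ → ℝ → ℤ) (x₁ x₂ y₁ y₂ : ℝ) : ℤ :=
  R x₂ y₁ - R x₁ y₁ - R x₂ y₂ + R x₁ y₂

/-- The rank functions of persistence modules whose bars are bounded: `R x y`, for `x < y`, stands
for the number of bars born by `x` and alive at `y`. Values with `y ≤ x` are unconstrained. -/
structure IsRankFunction (R : ℝ → ℝ → ℤ) : Prop where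
  boxSum_nonneg : ∀ ⦃x₁ x₂ y₁ y₂⦄, x₁ ≤ x₂ → x₂ < y₁ → y₁ ≤ y₂ → 0 ≤ boxSum R x₁ x₂ y₁ y₂
  exists_eq_zero : ∃ K, ∀ x y, x < y → (x ≤ -K ∨ K ≤ y) → R x y = 0

/-- The rank function with time reversed, which exchanges births and deaths of bars. -/
def reflect (R : ℝ → ℝ → ℤ) : ℝ → ℝ → ℤ := fun x y => R (-y) (-x)

/-- The number of bars of `R` born exactly at `x` and alive at `t`, for `x < t`. -/
noncomputable def birthJump (R : ℝ → ℝ → ℤ) (x t : ℝ) : ℤ :=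
  sInf ((fun η => R (x + η) t - R (x - η) t) '' Ioo 0 (t - x))

/-- The multiplicity of `z` as a cornerpoint of `R`: the number of bars born at `z.1` and dying at
`z.2`. It is `mult` with an arbitrary function in place of the size function. -/
noncomputable def cornerMult (R : ℝ → ℝ → ℤ) (z : ℝ × ℝ) : ℤ :=
  sInf ((fun η => boxSum R (z.1 - η) (z.1 + η) (z.2 - η) (z.2 + η)) '' Ioo 0 ((z.2 - z.1) / 2))

/-- The times at which the bar `b = (x, k)` of `R` is alive: among the bars born at `x`, it is the
`k`-th longest, counting from `0`. -/
def lifespan (R : ℝ → ℝ → ℤ) (b : ℝ × ℕ) : Set ℝ := {t | b.1 < t ∧ b.2 < birthJump R b.1 t}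

/-- The barcode of `R`. A bar is encoded by its birth time `x` and by its position `k`, in order of
decreasing length, among the bars born at `x`. -/
def bars (R : ℝ → ℝ → ℤ) : Set (ℝ × ℕ) := {b | (lifespan R b).Nonempty}

/-- The cornerpoint of a bar: its birth and death times. -/
noncomputable def barPoint (R : ℝ → ℝ → ℤ) (b : bars R) : ℝ × ℝ := (b.1.1, sSup (lifespan R b))

/-- The family `p` lists each point `z` above the diagonal `μ z` times, and nothing else. -/
structure IsDiagram {ι : Type*} (μ : ℝ × ℝ → ℤ) (p : ι → ℝ × ℝ) : Prop where
  fst_lt_snd : ∀ i, (p i).1 < (p i).2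
  encard_fiber : ∀ z : ℝ × ℝ, z.1 < z.2 → (p ⁻¹' {z}).encard = (μ z).toNat

namespace IsRankFunction

variable {R : ℝ → ℝ → ℤ} {x y s t : ℝ}

theorem mono (hR : IsRankFunction R) (hxy : x ≤ y) (hyt : y < t) : R x t ≤ R y t := by
  obtain ⟨K, hK⟩ := hR.exists_eq_zero
  have hbox := hR.boxSum_nonneg hxy hyt (le_max_left t K)
  have hmax : y < max t K := lt_max_of_lt_left hyt
  rw [boxSum, hK x _ (hxy.trans_lt hmax) (.inr (le_max_right t K)),
    hK y _ hmax (.inr (le_max_right t K))] at hbox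
  lia

theorem boxSum_mono (hR : IsRankFunction R) {x₁ x₂ y₁ y₂ x₁' x₂' y₁' y₂' : ℝ} (hx₁ : x₁' ≤ x₁)
    (hx : x₁ ≤ x₂) (hx₂ : x₂ ≤ x₂') (hxy : x₂' < y₁') (hy₁ : y₁' ≤ y₁) (hy : y₁ ≤ y₂)
    (hy₂ : y₂ ≤ y₂') : boxSum R x₁ x₂ y₁ y₂ ≤ boxSum R x₁' x₂' y₁' y₂' := by
  have left := hR.boxSum_nonneg (y₁ := y₁') (y₂ := y₂') hx₁ (by linarith) (by linarith)
  have right := hR.boxSum_nonneg (y₁ := y₁') (y₂ := y₂') hx₂ (by linarith) (by linarith)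
  have bottom := hR.boxSum_nonneg hx (by linarith) hy₁
  have top := hR.boxSum_nonneg hx (by linarith) hy₂
  unfold boxSum at *
  lia

theorem reflect (hR : IsRankFunction R) : IsRankFunction (reflect R) where
  boxSum_nonneg x₁ x₂ y₁ y₂ hx hxy hy := by
    have := hR.boxSum_nonneg (neg_le_neg hy) (neg_lt_neg hxy) (neg_le_neg hx)
    unfold boxSum _root_.reflect at *
    lia
  exists_eq_zero := by
    obtain ⟨K, hK⟩ := hR.exists_eq_zero
    refine ⟨K, fun x y hxy h => hK _ _ (neg_lt_neg hxy) ?_⟩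
    exact h.symm.imp neg_le_neg le_neg_of_le_neg

theorem eventually_sub_eq_birthJump (hR : IsRankFunction R) (hxt : x < t) :
    ∀ᶠ η in 𝓝[>] 0, R (x + η) t - R (x - η) t = birthJump R x t := by
  refine eventually_eq_sInf_image_Ioo (sub_pos.2 hxt) (fun η hη η' hη' hle => ?_) ⟨0, ?_⟩
  · exact sub_le_sub (hR.mono (by linarith) (by linarith [hη'.2]))
      (hR.mono (by linarith) (by linarith [hη.1]))
  · rintro _ ⟨η, hη, rfl⟩
    exact sub_nonneg.2 (hR.mono (by linarith [hη.1]) (by linarith [hη.2]))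

theorem eventually_boxSum_eq_cornerMult (hR : IsRankFunction R) (hxy : x < y) :
    ∀ᶠ η in 𝓝[>] 0, boxSum R (x - η) (x + η) (y - η) (y + η) = cornerMult R (x, y) := by
  refine eventually_eq_sInf_image_Ioo (by simpa using hxy) (fun η hη η' hη' hle => ?_) ⟨0, ?_⟩
  · apply hR.boxSum_mono <;> linarith [hη.1, hη'.2]
  · rintro _ ⟨η, hη, rfl⟩
    apply hR.boxSum_nonneg <;> linarith [hη.1, hη.2]

theorem birthJump_anti (hR : IsRankFunction R) (hxs : x < s) (hst : s ≤ t) :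
    birthJump R x t ≤ birthJump R x s := by
  obtain ⟨η, hs, ht, hη⟩ := ((hR.eventually_sub_eq_birthJump hxs).and
    ((hR.eventually_sub_eq_birthJump (hxs.trans_le hst)).and
      (Ioo_mem_nhdsGT (sub_pos.2 hxs)))).exists
  have := hR.boxSum_nonneg (x₁ := x - η) (x₂ := x + η) (by linarith [hη.1]) (by linarith [hη.2]) hst
  unfold boxSum at this
  lia

theorem birthJump_nonneg (hR : IsRankFunction R) (hxt : x < t) : 0 ≤ birthJump R x t := by
  obtain ⟨η, hjump, hη⟩ := ((hR.eventually_sub_eq_birthJump hxt).and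
    (Ioo_mem_nhdsGT (sub_pos.2 hxt))).exists
  rw [← hjump]
  exact sub_nonneg.2 (hR.mono (by linarith [hη.1]) (by linarith [hη.2]))

theorem eventually_birthJump_sub_eq_cornerMult (hR : IsRankFunction R) (hxy : x < y) :
    ∀ᶠ η in 𝓝[>] 0,
      birthJump R x (y - η) - birthJump R x (y + η) = cornerMult R (x, y) := by
  have hbox := hR.eventually_boxSum_eq_cornerMult hxy
  filter_upwards [hbox, Ioo_mem_nhdsGT (half_pos (sub_pos.2 hxy))] with η hη ⟨hη₀, hη₁⟩
  -- A rectangle of width `2m` and height `2η` lies between the squares of sides `2m` and `2η`.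
  obtain ⟨m, hm, hlo, hhi, hm₀, hmη⟩ := (hbox.and
    ((hR.eventually_sub_eq_birthJump (by linarith : x < y - η)).and
      ((hR.eventually_sub_eq_birthJump (by linarith : x < y + η)).and
        (Ioo_mem_nhdsGT hη₀)))).exists
  have hinner : boxSum R (x - m) (x + m) (y - m) (y + m) ≤
      boxSum R (x - m) (x + m) (y - η) (y + η) := by
    apply hR.boxSum_mono <;> linarith
  have houter : boxSum R (x - m) (x + m) (y - η) (y + η) ≤
      boxSum R (x - η) (x + η) (y - η) (y + η) := by
    apply hR.boxSum_mono <;> linarith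
  unfold boxSum at *
  lia

theorem exists_eventually_birthJump_eq (hR : IsRankFunction R) (hxy : x < y) :
    ∃ m : ℕ, ∀ᶠ η in 𝓝[>] 0,
      birthJump R x (y + η) = m ∧ birthJump R x (y - η) = m + cornerMult R (x, y) := by
  have hpos : ∀ η ∈ Ioo 0 (y - x), 0 ≤ birthJump R x (y - η) := fun η hη =>
    hR.birthJump_nonneg (by linarith [hη.2])
  have hleft := eventually_eq_sInf_image_Ioo (f := fun η => birthJump R x (y - η)) (sub_pos.2 hxy)
    (fun η _ η' hη' hle => hR.birthJump_anti (by linarith [hη'.2]) (by linarith))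
    ⟨0, forall_mem_image.2 hpos⟩
  have hjump := hR.eventually_birthJump_sub_eq_cornerMult hxy
  obtain ⟨η, hη, hη', hη₀⟩ := (hleft.and (hjump.and self_mem_nhdsWithin)).exists
  have hnonneg := hR.birthJump_nonneg (hxy.trans (lt_add_of_pos_right y hη₀))
  refine ⟨(birthJump R x (y + η)).toNat, ?_⟩
  filter_upwards [hleft, hjump] with η' h h'
  lia

theorem mem_lifespan_of_le (hR : IsRankFunction R) {b : ℝ × ℕ} (ht : t ∈ lifespan R b)
    (hs : b.1 < s) (hst : s ≤ t) : s ∈ lifespan R b :=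
  ⟨hs, ht.2.trans_le (hR.birthJump_anti hs hst)⟩

theorem bddAbove_lifespan (hR : IsRankFunction R) (b : ℝ × ℕ) : BddAbove (lifespan R b) := by
  obtain ⟨K, hK⟩ := hR.exists_eq_zero
  refine ⟨K, fun t ht => le_of_not_gt fun hKt => ?_⟩
  obtain ⟨η, hη, hη₀, hη₁⟩ := ((hR.eventually_sub_eq_birthJump ht.1).and
    (Ioo_mem_nhdsGT (sub_pos.2 ht.1))).exists
  have := ht.2
  rw [← hη, hK _ _ (by linarith) (.inr hKt.le), hK _ _ (by linarith) (.inr hKt.le)] at this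
  lia

theorem isLUB_lifespan (hR : IsRankFunction R) (b : bars R) :
    IsLUB (lifespan R b) (barPoint R b).2 :=
  isLUB_csSup b.2 (hR.bddAbove_lifespan b)

theorem exists_isLUB_lifespan_iff (hR : IsRankFunction R) (hxy : x < y) :
    ∃ m : ℕ, ∀ k : ℕ, (lifespan R (x, k)).Nonempty ∧ IsLUB (lifespan R (x, k)) y ↔
      k ∈ Ico m (m + (cornerMult R (x, y)).toNat) := by
  obtain ⟨m, hm⟩ := hR.exists_eventually_birthJump_eq hxy
  refine ⟨m, fun k => ⟨fun ⟨_, hlub⟩ => ?_, fun hk => ?_⟩⟩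
  · obtain ⟨η, ⟨habove, hbelow⟩, hη⟩ := (hm.and (Ioo_mem_nhdsGT (sub_pos.2 hxy))).exists
    have hdead : ¬(k : ℤ) < birthJump R x (y + η) := fun hk => by
      have : y + η ≤ y := hlub.1 ⟨by simp only; linarith [hη.1], hk⟩
      linarith [hη.1]
    obtain ⟨t, ht, htη, -⟩ := hlub.exists_between (sub_lt_self y hη.1)
    have halive : (k : ℤ) < birthJump R x (y - η) :=
      (hR.mem_lifespan_of_le ht (by simp only; linarith [hη.2]) htη.le).2
    rw [mem_Ico]
    lia
  · have hbelow : ∀ s < y, ∃ t ∈ lifespan R (x, k), s < t := fun s hs => by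
      obtain ⟨η, hη, -, hη₁⟩ := (hm.and
        (Ioo_mem_nhdsGT (sub_pos.2 (max_lt hxy hs)))).exists
      have := max_lt_iff.1 (lt_sub_comm.1 hη₁)
      exact ⟨y - η, ⟨this.1, by rw [hη.2]; have := hk.1; have := hk.2; simp only; lia⟩, this.2⟩
    have habove : y ∈ upperBounds (lifespan R (x, k)) := fun t ht => by
      by_contra! hyt
      obtain ⟨η, hη, hη₀, hη₁⟩ := (hm.and (Ioo_mem_nhdsGT (sub_pos.2 hyt))).exists
      have := (hR.mem_lifespan_of_le ht (s := y + η) (by simp only; linarith) (by linarith)).2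
      have := hk.1
      simp only at *
      lia
    obtain ⟨t, ht, -⟩ := hbelow x hxy
    refine ⟨⟨t, ht⟩, habove, fun s hs => le_of_not_gt fun hsy => ?_⟩
    obtain ⟨t, ht, hst⟩ := hbelow s hsy
    exact hst.not_ge (hs ht)

theorem fst_barPoint_lt_snd (hR : IsRankFunction R) (b : bars R) :
    (barPoint R b).1 < (barPoint R b).2 := by
  obtain ⟨t, ht⟩ := b.2
  exact ht.1.trans_le ((hR.isLUB_lifespan b).1 ht)

theorem isDiagram_barPoint (hR : IsRankFunction R) : IsDiagram (cornerMult R) (barPoint R) where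
  fst_lt_snd := hR.fst_barPoint_lt_snd
  encard_fiber := by
    rintro ⟨x, y⟩ hxy
    obtain ⟨m, hm⟩ := hR.exists_isLUB_lifespan_iff hxy
    have himage : Subtype.val '' (barPoint R ⁻¹' {(x, y)}) =
        Prod.mk x '' Ico m (m + (cornerMult R (x, y)).toNat) := by
      ext ⟨x', k⟩
      constructor
      · rintro ⟨⟨_, hb⟩, hpt, rfl⟩
        obtain ⟨rfl, rfl⟩ := Prod.ext_iff.1 hpt
        exact ⟨k, (hm k).1 ⟨hb, hR.isLUB_lifespan ⟨_, hb⟩⟩, rfl⟩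
      · rintro ⟨k, hk, rfl, rfl⟩
        obtain ⟨hne, hlub⟩ := (hm k).2 hk
        exact ⟨⟨(x, k), hne⟩, Prod.ext rfl (hlub.csSup_eq hne), rfl⟩
    rw [← Subtype.val_injective.encard_image, himage, (Prod.mk_right_injective x).encard_image,
      ← Finset.coe_Ico, encard_coe_eq_coe_finsetCard, Nat.card_Ico, Nat.add_sub_cancel_left]

theorem birthJump_eq_zero_of_continuousWithinAt (hR : IsRankFunction R) (hxt : x < t)
    (hcont : ContinuousWithinAt (fun z => R z t) (Iio t) x) : birthJump R x t = 0 := by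
  have hconst : ∀ᶠ z in 𝓝 x, R z t = R x t := by
    simpa only [ContinuousAt, nhds_discrete ℤ, Filter.tendsto_pure] using
      hcont.continuousAt (Iio_mem_nhds hxt)
  have hright : Filter.Tendsto (fun η => x + η) (𝓝[>] 0) (𝓝 x) :=
    (Continuous.tendsto' (by fun_prop) 0 x (add_zero x)).mono_left nhdsWithin_le_nhds
  have hleft : Filter.Tendsto (fun η => x - η) (𝓝[>] 0) (𝓝 x) :=
    (Continuous.tendsto' (by fun_prop) 0 x (sub_zero x)).mono_left nhdsWithin_le_nhds
  obtain ⟨η, hη, hr, hl⟩ := ((hR.eventually_sub_eq_birthJump hxt).and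
    ((hright.eventually hconst).and (hleft.eventually hconst))).exists
  rw [← hη, hr, hl, sub_self]

theorem countable_bars (hR : IsRankFunction R) : (bars R).Countable := by
  have hdisc (q : ℚ) : {x | x ∈ Iio (q : ℝ) ∧
      ¬ContinuousWithinAt (fun z => R z q) (Iio (q : ℝ)) x}.Countable :=
    MonotoneOn.countable_not_continuousWithinAt fun _ _ _ hy hxy => hR.mono hxy hy
  refine ((countable_iUnion hdisc).prod (countable_univ (α := ℕ))).mono ?_
  rintro ⟨x, k⟩ ⟨t, hxt, hk⟩
  obtain ⟨q, hxq, hqt⟩ := exists_rat_btwn hxt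
  refine ⟨mem_iUnion.2 ⟨q, hxq, fun hcont => ?_⟩, mem_univ _⟩
  have := hR.birthJump_anti hxq hqt.le
  rw [hR.birthJump_eq_zero_of_continuousWithinAt hxq hcont] at this
  simp only at hk
  lia

end IsRankFunction

namespace IsDiagram

variable {ι κ : Type*} {μ : ℝ × ℝ → ℤ} {p : ι → ℝ × ℝ}

theorem mult_pos (hp : IsDiagram μ p) (i : ι) : 0 < μ (p i) := by
  by_contra! hμ
  have hempty := hp.encard_fiber (p i) (hp.fst_lt_snd i)
  rw [Int.toNat_of_nonpos hμ, Nat.cast_zero, encard_eq_zero] at hempty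
  exact notMem_empty i (hempty ▸ rfl)

theorem comp_equiv (hp : IsDiagram μ p) (e : κ ≃ ι) : IsDiagram μ (p ∘ e) where
  fst_lt_snd k := hp.fst_lt_snd (e k)
  encard_fiber z hz := by
    rw [preimage_comp, encard_preimage_of_bijective e.bijective, hp.encard_fiber z hz]

theorem map {ν : ℝ × ℝ → ℤ} (hp : IsDiagram μ p) (e : ℝ × ℝ ≃ ℝ × ℝ)
    (he : ∀ z, (e z).1 < (e z).2 ↔ z.1 < z.2) (hμν : ∀ z, ν (e z) = μ z) :
    IsDiagram ν (e ∘ p) where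
  fst_lt_snd i := (he _).2 (hp.fst_lt_snd i)
  encard_fiber z hz := by
    obtain ⟨z, rfl⟩ := e.surjective z
    rw [preimage_comp, ← image_singleton, e.preimage_image, hp.encard_fiber z ((he z).1 hz), hμν]

theorem exists_equiv {q : κ → ℝ × ℝ} (hp : IsDiagram μ p) (hq : IsDiagram μ q) :
    ∃ e : ι ≃ κ, ∀ i, q (e i) = p i := by
  have hfiber (z : ℝ × ℝ) : Nonempty ({i // p i = z} ≃ {k // q k = z}) := by
    by_cases hz : z.1 < z.2
    · have := (finite_of_encard_eq_coe (hp.encard_fiber z hz)).to_subtype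
      have := (finite_of_encard_eq_coe (hq.encard_fiber z hz)).to_subtype
      change Nonempty (↥(p ⁻¹' {z}) ≃ ↥(q ⁻¹' {z}))
      rw [← Finite.card_eq, Nat.card_coe_set_eq, Nat.card_coe_set_eq, ncard_def, ncard_def,
        hp.encard_fiber z hz, hq.encard_fiber z hz]
    · have : IsEmpty {i // p i = z} := ⟨fun i => hz (i.2 ▸ hp.fst_lt_snd i)⟩
      have : IsEmpty {k // q k = z} := ⟨fun k => hz (k.2 ▸ hq.fst_lt_snd k)⟩
      exact ⟨Equiv.equivOfIsEmpty _ _⟩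
  exact ⟨Equiv.ofFiberEquiv fun z => (hfiber z).some, Equiv.ofFiberEquiv_map _⟩

open scoped Classical in
theorem sumElim_compl_range (hp : IsDiagram μ p) {u : κ → ι} (hu : Function.Injective u) :
    IsDiagram μ (Sum.elim (p ∘ u) fun i : ↥(range u)ᶜ => p i) := by
  convert hp.comp_equiv (((Equiv.ofInjective u hu).sumCongr (Equiv.refl _)).trans
    (Equiv.Set.sumCompl (range u))) using 1
  ext1 (k | i) <;> simp

end IsDiagram

/-! ### Truncations and partial matchings -/

/-- Time reversal on cornerpoints: the bar from `z.1` to `z.2` becomes that from `-z.2` to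
`-z.1`. -/
def reflectPoint : ℝ × ℝ ≃ ℝ × ℝ := (Equiv.prodComm ℝ ℝ).trans (Equiv.neg (ℝ × ℝ))

theorem cornerMult_reflect (R : ℝ → ℝ → ℤ) (z : ℝ × ℝ) :
    cornerMult (reflect R) (reflectPoint z) = cornerMult R z := by
  have hbox (η : ℝ) : boxSum (reflect R) (-z.2 - η) (-z.2 + η) (-z.1 - η) (-z.1 + η) =
      boxSum R (z.1 - η) (z.1 + η) (z.2 - η) (z.2 + η) := by
    simp only [boxSum, reflect, neg_sub', neg_add', neg_neg, sub_neg_eq_add]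
    lia
  simp only [cornerMult, reflectPoint, Equiv.trans_apply, Equiv.prodComm_apply, Equiv.neg_apply,
    Prod.fst_neg, Prod.snd_neg, Prod.fst_swap, Prod.snd_swap, hbox, neg_sub_neg]

theorem IsDiagram.reflect {ι : Type*} {R : ℝ → ℝ → ℤ} {p : ι → ℝ × ℝ}
    (hp : IsDiagram (cornerMult R) p) :
    IsDiagram (cornerMult (reflect R)) (reflectPoint ∘ p) :=
  hp.map reflectPoint (fun z => by simp [reflectPoint]) (cornerMult_reflect R)

/-- The barcode of `S` arises from that of `R` by making each bar end earlier by at most `e`, where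
bars shortened to nothing disappear. This is what a surjection of persistence modules with
`e`-trivial kernel does to rank functions. -/
structure IsTruncation (e : ℝ) (R S : ℝ → ℝ → ℤ) : Prop where
  sub_le_sub : ∀ ⦃x y t⦄, x ≤ y → y < t → S y t - S x t ≤ R y t - R x t
  sub_le_sub_shift : ∀ ⦃x y t⦄, x ≤ y → y + e < t → R y t - R x t ≤ S y (t - e) - S x (t - e)

namespace IsTruncation

variable {R S : ℝ → ℝ → ℤ} {e x t : ℝ}

theorem birthJump_le (h : IsTruncation e R S) (hR : IsRankFunction R) (hS : IsRankFunction S)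
    (hxt : x < t) : birthJump S x t ≤ birthJump R x t := by
  obtain ⟨η, hηR, hηS, hη⟩ := ((hR.eventually_sub_eq_birthJump hxt).and
    ((hS.eventually_sub_eq_birthJump hxt).and (Ioo_mem_nhdsGT (sub_pos.2 hxt)))).exists
  rw [← hηR, ← hηS]
  exact h.sub_le_sub (by linarith [hη.1]) (by linarith [hη.2])

theorem birthJump_le_shift (h : IsTruncation e R S) (he : 0 ≤ e) (hR : IsRankFunction R)
    (hS : IsRankFunction S) (hxt : x + e < t) : birthJump R x t ≤ birthJump S x (t - e) := by
  obtain ⟨η, hηR, hηS, hη⟩ := ((hR.eventually_sub_eq_birthJump (by linarith : x < t)).and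
    ((hS.eventually_sub_eq_birthJump (lt_sub_iff_add_lt.2 hxt)).and
      (Ioo_mem_nhdsGT (sub_pos.2 hxt)))).exists
  rw [← hηR, ← hηS]
  exact h.sub_le_sub_shift (by linarith [hη.1]) (by linarith [hη.2])

theorem lifespan_subset (h : IsTruncation e R S) (hR : IsRankFunction R) (hS : IsRankFunction S)
    (b : ℝ × ℕ) : lifespan S b ⊆ lifespan R b := fun _ ht =>
  ⟨ht.1, ht.2.trans_le (h.birthJump_le hR hS ht.1)⟩

theorem sub_mem_lifespan (h : IsTruncation e R S) (he : 0 ≤ e) (hR : IsRankFunction R)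
    (hS : IsRankFunction S) {b : ℝ × ℕ} (ht : t ∈ lifespan R b) (hbt : b.1 + e < t) :
    t - e ∈ lifespan S b :=
  ⟨lt_sub_iff_add_lt.2 hbt, ht.2.trans_le (h.birthJump_le_shift he hR hS hbt)⟩

theorem bars_subset (h : IsTruncation e R S) (hR : IsRankFunction R) (hS : IsRankFunction S) :
    bars S ⊆ bars R := fun b hb => hb.mono (h.lifespan_subset hR hS b)

theorem snd_barPoint_inclusion_mem_Icc (h : IsTruncation e R S) (he : 0 ≤ e)
    (hR : IsRankFunction R) (hS : IsRankFunction S) (b : bars S) :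
    (barPoint R (inclusion (h.bars_subset hR hS) b)).2 ∈
      Icc (barPoint S b).2 ((barPoint S b).2 + e) := by
  have hlubR := hR.isLUB_lifespan (inclusion (h.bars_subset hR hS) b)
  have hlubS := hS.isLUB_lifespan b
  refine ⟨hlubS.mono hlubR (h.lifespan_subset hR hS b), hlubR.2 fun t ht => ?_⟩
  by_contra! hlt
  have hbirth := hS.fst_barPoint_lt_snd b
  have := hlubS.1 (h.sub_mem_lifespan he hR hS ht
    (lt_of_lt_of_le' hlt (by gcongr; exact hbirth.le)))
  linarith

theorem snd_barPoint_le_of_notMem (h : IsTruncation e R S) (he : 0 ≤ e) (hR : IsRankFunction R)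
    (hS : IsRankFunction S) {b : bars R} (hb : (b : ℝ × ℕ) ∉ bars S) :
    (barPoint R b).2 ≤ (barPoint R b).1 + e := by
  refine (hR.isLUB_lifespan b).2 fun t ht => ?_
  by_contra! hlt
  exact hb ⟨t - e, h.sub_mem_lifespan he hR hS ht hlt⟩

theorem exists_injective {ι κ : Type*} {p : ι → ℝ × ℝ} {q : κ → ℝ × ℝ} (h : IsTruncation e R S)
    (he : 0 ≤ e) (hR : IsRankFunction R) (hS : IsRankFunction S)
    (hp : IsDiagram (cornerMult R) p) (hq : IsDiagram (cornerMult S) q) :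
    ∃ u : κ → ι, Function.Injective u ∧
      (∀ k, (p (u k)).1 = (q k).1 ∧ (p (u k)).2 ∈ Icc (q k).2 ((q k).2 + e)) ∧
      ∀ i ∉ range u, (p i).2 ≤ (p i).1 + e := by
  obtain ⟨f, hf⟩ := hR.isDiagram_barPoint.exists_equiv hp
  obtain ⟨g, hg⟩ := hq.exists_equiv hS.isDiagram_barPoint
  have hsub := h.bars_subset hR hS
  refine ⟨f ∘ inclusion hsub ∘ g,
    f.injective.comp ((inclusion_injective hsub).comp g.injective), fun k => ?_, fun i hi => ?_⟩
  · rw [Function.comp_apply, hf, ← hg k]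
    exact ⟨rfl, h.snd_barPoint_inclusion_mem_Icc he hR hS (g k)⟩
  · obtain ⟨b, rfl⟩ := f.surjective i
    rw [hf]
    refine h.snd_barPoint_le_of_notMem he hR hS fun hb => hi ⟨g.symm ⟨b, hb⟩, ?_⟩
    simp

end IsTruncation

/-- A partial matching of cost at most `ε` between the families `p` and `q`: the members `p (u t)`
and `q (v t)` are matched with each other, and all the others with the diagonal. -/
structure IsPartialMatching {ι κ τ : Type*} (ε : ℝ) (p : ι → ℝ × ℝ) (q : κ → ℝ × ℝ) (u : τ → ι)
    (v : τ → κ) : Prop where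
  injective_left : Function.Injective u
  injective_right : Function.Injective v
  dist_le : ∀ t, dist (p (u t)) (q (v t)) ≤ ε
  sub_le_left : ∀ i ∉ range u, (p i).2 - (p i).1 ≤ 2 * ε
  sub_le_right : ∀ k ∉ range v, (q k).2 - (q k).1 ≤ 2 * ε

theorem IsTruncation.exists_isPartialMatching {ι κ : Type*} {R S T : ℝ → ℝ → ℤ} {ε : ℝ}
    {p : ι → ℝ × ℝ} {q : κ → ℝ × ℝ} (hε : 0 ≤ ε) (hR : IsRankFunction R) (hS : IsRankFunction S)
    (hT : IsRankFunction T) (hRS : IsTruncation (2 * ε) R S)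
    (hTS : IsTruncation (2 * ε) (reflect T) (reflect S)) (hp : IsDiagram (cornerMult R) p)
    (hq : IsDiagram (cornerMult T) q) :
    ∃ (u : bars S → ι) (v : bars S → κ), IsPartialMatching ε p (fun k => q k + (ε, ε)) u v := by
  have hε₂ : 0 ≤ 2 * ε := by positivity
  have hs := hS.isDiagram_barPoint
  obtain ⟨u, hu, huS, hu'⟩ := hRS.exists_injective hε₂ hR hS hp hs
  obtain ⟨v, hv, hvS, hv'⟩ :=
    hTS.exists_injective hε₂ hT.reflect hS.reflect hq.reflect hs.reflect
  refine ⟨u, v, hu, hv, fun b => ?_, fun i hi => by linarith [hu' i hi], fun k hk => ?_⟩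
  · obtain ⟨hbirth, hdeath⟩ := huS b
    obtain ⟨hdeath', hbirth'⟩ := hvS b
    simp only [reflectPoint, Function.comp_apply, Equiv.trans_apply, Equiv.prodComm_apply,
      Equiv.neg_apply, Prod.fst_neg, Prod.snd_neg, Prod.fst_swap, Prod.snd_swap] at hdeath' hbirth'
    simp only [Prod.dist_eq, Real.dist_eq, Prod.fst_add, Prod.snd_add, max_le_iff, abs_le]
    refine ⟨⟨?_, ?_⟩, ?_, ?_⟩ <;> linarith [hdeath.1, hdeath.2, hbirth'.1, hbirth'.2]
  · have := hv' k hk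
    simp only [reflectPoint, Function.comp_apply, Equiv.trans_apply, Equiv.prodComm_apply,
      Equiv.neg_apply, Prod.fst_neg, Prod.snd_neg, Prod.fst_swap, Prod.snd_swap] at this
    simp only [Prod.fst_add, Prod.snd_add]
    linarith

/-! ### Representative sequences -/

theorem eDist_top_le {k k' ε : ℝ} (h : |k - k'| ≤ ε) :
    eDist (k, ⊤) (k', ⊤) ≤ ENNReal.ofReal ε := by
  simpa [eDist] using ENNReal.ofReal_le_ofReal h

theorem eDist_coe (z w : ℝ × ℝ) :
    eDist (z.1, (z.2 : EReal)) (w.1, (w.2 : EReal)) =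
      ENNReal.ofReal (min (dist z w) (max ((z.2 - z.1) / 2) ((w.2 - w.1) / 2))) := by
  simp [eDist, Prod.dist_eq, Real.dist_eq]

theorem eDist_coe_le_of_dist_le {z w : ℝ × ℝ} {ε : ℝ} (h : dist z w ≤ ε) :
    eDist (z.1, (z.2 : EReal)) (w.1, (w.2 : EReal)) ≤ ENNReal.ofReal ε :=
  (eDist_coe z w).trans_le (ENNReal.ofReal_le_ofReal ((min_le_left _ _).trans h))

theorem eDist_coe_le_of_sub_le {z w : ℝ × ℝ} {ε : ℝ} (hz : z.2 - z.1 ≤ 2 * ε)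
    (hw : w.2 - w.1 ≤ 2 * ε) :
    eDist (z.1, (z.2 : EReal)) (w.1, (w.2 : EReal)) ≤ ENNReal.ofReal ε :=
  (eDist_coe z w).trans_le (ENNReal.ofReal_le_ofReal
    ((min_le_right _ _).trans (max_le (by linarith) (by linarith))))

/-- The sequence of cornerpoints, for use in `IsRepSeq`, made of a cornerpoint at infinity on the
line `x = k` and of the points `c 0, c 1, …`. -/
noncomputable def repSeq (k : ℝ) (c : ℕ → ℝ × ℝ) : ℕ → ℝ × EReal
  | 0 => (k, ⊤)
  | n + 1 => ((c n).1, ((c n).2 : EReal))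

theorem dMatchSeq_repSeq_le {k k' ε : ℝ} {c c' : ℕ → ℝ × ℝ} (hk : |k - k'| ≤ ε)
    (hc : ∀ n, dist (c n) (c' n) ≤ ε ∨
      (c n).2 - (c n).1 ≤ 2 * ε ∧ (c' n).2 - (c' n).1 ≤ 2 * ε) :
    dMatchSeq (repSeq k c) (repSeq k' c') ≤ ENNReal.ofReal ε := by
  refine (iInf_le _ ⟨id, Function.bijective_id⟩).trans (iSup_le fun i => ?_)
  obtain _ | n := i
  · exact eDist_top_le hk
  · exact (hc n).elim eDist_coe_le_of_dist_le fun h => eDist_coe_le_of_sub_le h.1 h.2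

theorem setOf_repSeq_eq_coe (k : ℝ) (c : ℕ → ℝ × ℝ) (z : ℝ × ℝ) :
    {i | repSeq k c i = (z.1, (z.2 : EReal))} = Nat.succ '' (c ⁻¹' {z}) := by
  ext (_ | n) <;> simp [repSeq, Prod.ext_iff]

theorem IsDiagram.isRepSeq_repSeq {M B D : Type*} [TopologicalSpace M] [Infinite D] {φ : M → ℝ}
    {k : ℝ} {p : B → ℝ × ℝ} (hk : 0 < multInf φ k) (hp : IsDiagram (mult φ) p) (d : D → ℝ)
    (s : ℕ ≃ B ⊕ D) : IsRepSeq φ (repSeq k (Sum.elim p (fun i => (d i, d i)) ∘ s)) := by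
  refine ⟨⟨k, rfl, hk⟩, ?_, fun x y hxy _ => ?_, ?_⟩
  · rintro (_ | n) hn
    · exact absurd hn (lt_irrefl 0)
    · obtain ⟨b | i, hs⟩ : ∃ j, s n = j := ⟨_, rfl⟩
      · exact .inl ⟨_, _, by simp [repSeq, hs], hp.fst_lt_snd b, hp.mult_pos b⟩
      · exact .inr ⟨d i, by simp [repSeq, hs]⟩
  · have hfiber : Sum.elim p (fun i => (d i, d i)) ⁻¹' {(x, y)} = Sum.inl '' (p ⁻¹' {(x, y)}) := by
      ext (b | i)
      · simp
      · simpa using fun hx hy => hxy.ne (hx.symm.trans hy)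
    rw [setOf_repSeq_eq_coe k _ (x, y), ncard_def, Nat.succ_injective.encard_image, preimage_comp,
      encard_preimage_of_bijective s.bijective, hfiber, Sum.inl_injective.encard_image,
      hp.encard_fiber _ hxy, ENat.toNat_natCast]
  · have hinj : Function.Injective fun i : D => (s.symm (.inr i)).succ :=
      Nat.succ_injective.comp (s.symm.injective.comp Sum.inr_injective)
    refine (infinite_range_of_injective hinj).mono ?_
    rintro _ ⟨i, rfl⟩
    exact ⟨d i, by simp [repSeq]⟩

theorem IsPartialMatching.dMatch_le {M N ι κ τ : Type*} [TopologicalSpace M] [TopologicalSpace N]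
    [Countable ι] [Countable κ] {φ : M → ℝ} {ψ : N → ℝ} {p : ι → ℝ × ℝ} {q : κ → ℝ × ℝ}
    {u : τ → ι} {v : τ → κ} {ε k k' : ℝ} (h : IsPartialMatching ε p q u v)
    (hp : IsDiagram (mult φ) p) (hq : IsDiagram (mult ψ) q) (hk : 0 < multInf φ k)
    (hk' : 0 < multInf ψ k') (hkk' : |k - k'| ≤ ε) : dMatch φ ψ ≤ ENNReal.ofReal ε := by
  have : Countable τ := h.injective_left.countable
  let U := ↥(range u)ᶜ
  let V := ↥(range v)ᶜ
  obtain ⟨e⟩ : Nonempty (ℕ ≃ (τ ⊕ U) ⊕ (V ⊕ ℕ)) := nonempty_equiv_of_countable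
  let e' : ℕ ≃ (τ ⊕ V) ⊕ (U ⊕ ℕ) := e.trans (Equiv.sumSumSumComm τ U V ℕ)
  let d : V ⊕ ℕ → ℝ := Sum.elim (fun j => (q j).1) 0
  let d' : U ⊕ ℕ → ℝ := Sum.elim (fun i => (p i).1) 0
  have ha := (hp.sumElim_compl_range h.injective_left).isRepSeq_repSeq hk d e
  have hb := (hq.sumElim_compl_range h.injective_right).isRepSeq_repSeq hk' d' e'
  have hle : dMatch φ ψ ≤ dMatchSeq _ _ := sInf_le ⟨_, _, ha, hb, rfl⟩
  refine hle.trans (dMatchSeq_repSeq_le hkk' fun n => ?_)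
  have hdiag (x : ℝ) : x - x ≤ 2 * ε := by linarith [(abs_nonneg _).trans hkk']
  simp only [Function.comp_apply, e', Equiv.trans_apply]
  rcases e n with (t | i) | (j | m)
  · exact .inl (h.dist_le t)
  · exact .inr ⟨h.sub_le_left i i.2, hdiag _⟩
  · exact .inr ⟨hdiag _, h.sub_le_right j j.2⟩
  · exact .inr ⟨hdiag _, hdiag _⟩

theorem ncard_image_add_ncard_le {α β : Type*} {A A' : Set α} (f : α → β) (hA : A.Finite)
    (hA' : A' ⊆ A) : (f '' A).ncard + A'.ncard ≤ A.ncard + (f '' A').ncard := by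
  have hunion : f '' A = f '' (A \ A') ∪ f '' A' := by rw [← image_union, sdiff_union_of_subset hA']
  calc (f '' A).ncard + A'.ncard
      ≤ (f '' (A \ A')).ncard + (f '' A').ncard + A'.ncard := by
        rw [hunion]
        gcongr
        exact ncard_union_le _ _
    _ ≤ (A \ A').ncard + (f '' A').ncard + A'.ncard := by
        gcongr
        exact ncard_image_le hA.sdiff
    _ = A.ncard + (f '' A').ncard := by
        rw [← ncard_sdiff_add_ncard_of_subset hA' hA]
        ring

/-! ### Components of sublevel sets -/

section Components

variable {M : Type*} [TopologicalSpace M]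

/-- The number of connected components of `U` meeting `S`, for `S ⊆ U`; it is `0` when there are
infinitely many. -/
noncomputable def componentCount (S U : Set M) : ℕ := (connectedComponentIn U '' S).ncard

theorem rsf_eq_componentCount (φ : M → ℝ) (x y : ℝ) :
    rsf φ x y = componentCount {Q | φ Q ≤ x} {Q | φ Q ≤ y} := by
  simp only [rsf, componentCount, image, mem_ofPred_eq, eq_comm]

theorem image_biUnion_connectedComponentIn {S U U' : Set M} (hSU : S ⊆ U) (hUU' : U ⊆ U') :
    (fun C => ⋃ P ∈ C, connectedComponentIn U' P) '' (connectedComponentIn U '' S) =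
      connectedComponentIn U' '' S := by
  rw [image_image]
  refine image_congr fun P hP => ?_
  have hconst : ∀ Q ∈ connectedComponentIn U P,
      connectedComponentIn U' Q = connectedComponentIn U' P := fun Q hQ =>
    (connectedComponentIn_eq (connectedComponentIn_mono P hUU' hQ)).symm
  rw [iUnion₂_congr hconst, biUnion_const ⟨P, mem_connectedComponentIn (hSU hP)⟩]

theorem componentCount_add_le {S S' U U' : Set M} (hS : S' ⊆ S) (hSU : S ⊆ U) (hUU' : U ⊆ U')
    (hfin : (connectedComponentIn U '' S).Finite) :
    componentCount S U' + componentCount S' U ≤ componentCount S U + componentCount S' U' := by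
  have := ncard_image_add_ncard_le (fun C => ⋃ P ∈ C, connectedComponentIn U' P) hfin
    (image_mono hS)
  rwa [image_biUnion_connectedComponentIn hSU hUU',
    image_biUnion_connectedComponentIn (hS.trans hSU) hUU'] at this

variable {α β φ : M → ℝ} {x y e : ℝ}

/-- The reduced rank function of the inclusions `{α ≤ x} ⊆ {β ≤ y}`, where `β ≤ α`: the number of
components of `{β ≤ y}` meeting `{α ≤ x}`, less the number of bars born by `x` that never die. -/
noncomputable def imageRank (α β : M → ℝ) (x y : ℝ) : ℤ :=
  componentCount {Q | α Q ≤ x} {Q | β Q ≤ y} - componentCount {Q | α Q ≤ x} univ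

theorem imageRank_eq_zero_of_forall_lt (β : M → ℝ) (y : ℝ) (h : ∀ Q, x < α Q) :
    imageRank α β x y = 0 := by
  have hempty : {Q | α Q ≤ x} = ∅ := eq_empty_of_forall_notMem fun Q => (h Q).not_ge
  simp [imageRank, componentCount, hempty]

theorem imageRank_eq_zero_of_forall_le (α : M → ℝ) (x : ℝ) (h : ∀ Q, β Q ≤ y) :
    imageRank α β x y = 0 := by
  have huniv : {Q | β Q ≤ y} = univ := eq_univ_of_forall h
  rw [imageRank, huniv, sub_self]

theorem cornerMult_imageRank (φ : M → ℝ) : cornerMult (imageRank φ φ) = mult φ := by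
  ext z
  unfold cornerMult mult
  congr 1
  ext m
  simp only [image, mem_Ioo, mem_ofPred_eq, and_assoc]
  refine exists_congr fun η => and_congr_right fun _ => and_congr ⟨?_, ?_⟩ ?_
  · intro h; linarith
  · intro h; linarith
  · simp only [boxSum, imageRank, rsf_eq_componentCount]
    constructor <;> intro h <;> lia

theorem mult_sub_const (ψ : M → ℝ) (ε : ℝ) (z : ℝ × ℝ) :
    mult (fun Q => ψ Q - ε) z = mult ψ (z + (ε, ε)) := by
  have hrsf (x y : ℝ) : rsf (fun Q => ψ Q - ε) x y = rsf ψ (x + ε) (y + ε) := by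
    simp only [rsf, sub_le_iff_le_add]
  simp only [mult, hrsf, Prod.fst_add, Prod.snd_add, add_right_comm _ ε, add_sub_right_comm _ ε,
    add_lt_add_iff_right]

variable [CompactSpace M] [LocallyConnectedSpace M]

theorem finite_connectedComponentIn_image_sublevel (hβ : Continuous β) (hxy : x < y) :
    (connectedComponentIn {Q | β Q ≤ y} '' {Q | β Q ≤ x}).Finite := by
  have hopen : IsOpen {Q | β Q < y} := isOpen_lt hβ continuous_const
  obtain ⟨t, -, ht⟩ := (isClosed_le hβ continuous_const).isCompact.elim_nhds_subcover
    (connectedComponentIn {Q | β Q < y}) fun P (hP : β P ≤ x) =>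
      hopen.connectedComponentIn.mem_nhds (mem_connectedComponentIn (hP.trans_lt hxy))
  refine (t.finite_toSet.image (connectedComponentIn {Q | β Q ≤ y})).subset ?_
  rintro _ ⟨Q, hQ, rfl⟩
  obtain ⟨P, hP, hPQ⟩ := mem_iUnion₂.1 (ht hQ)
  exact ⟨P, hP, connectedComponentIn_eq
    (connectedComponentIn_mono P (fun _ (hz : β _ < y) => hz.le) hPQ)⟩

theorem componentCount_sublevel_add_le {α' γ : M → ℝ} {a a' c : ℝ} (hβ : Continuous β)
    (hxy : x < y) (hα' : ∀ Q, α' Q ≤ a' → α Q ≤ a) (hα : ∀ Q, α Q ≤ a → β Q ≤ x)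
    (hγ : ∀ Q, β Q ≤ y → γ Q ≤ c) :
    componentCount {Q | α Q ≤ a} {Q | γ Q ≤ c} + componentCount {Q | α' Q ≤ a'} {Q | β Q ≤ y} ≤
      componentCount {Q | α Q ≤ a} {Q | β Q ≤ y} +
        componentCount {Q | α' Q ≤ a'} {Q | γ Q ≤ c} :=
  componentCount_add_le hα' (fun Q hQ => (hα Q hQ).trans hxy.le) hγ
    ((finite_connectedComponentIn_image_sublevel hβ hxy).subset (image_mono hα))

theorem isRankFunction_imageRank (hα : Continuous α) (hβ : Continuous β) (hβα : β ≤ α) :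
    IsRankFunction (imageRank α β) where
  boxSum_nonneg x₁ x₂ y₁ y₂ hx hxy hy := by
    have := componentCount_sublevel_add_le hβ hxy
      (fun Q (hQ : α Q ≤ x₁) => hQ.trans hx) (fun Q (hQ : α Q ≤ x₂) => (hβα Q).trans hQ)
      (fun Q (hQ : β Q ≤ y₁) => hQ.trans hy)
    unfold boxSum imageRank
    lia
  exists_eq_zero := by
    obtain ⟨K, -, hK⟩ := (isCompact_range hα).isBounded.exists_pos_norm_lt
    obtain ⟨L, -, hL⟩ := (isCompact_range hβ).isBounded.exists_pos_norm_lt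
    refine ⟨max K L, fun x y _ h => h.elim (fun hx => ?_) fun hy => ?_⟩
    · refine imageRank_eq_zero_of_forall_lt β y fun Q => hx.trans_lt ?_
      have := (abs_lt.1 (hK _ (mem_range_self Q))).1
      linarith [le_max_left K L]
    · exact imageRank_eq_zero_of_forall_le α x fun Q =>
        (((le_abs_self _).trans_lt (hL _ (mem_range_self Q))).le.trans (le_max_right K L)).trans hy

theorem isDiagram_mult (hφ : Continuous φ) :
    IsDiagram (mult φ) (barPoint (imageRank φ φ)) :=
  cornerMult_imageRank φ ▸ (isRankFunction_imageRank hφ hφ le_rfl).isDiagram_barPoint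

theorem isTruncation_imageRank (hα : Continuous α) (hβ : Continuous β) (hβα : β ≤ α)
    (hαβ : ∀ Q, α Q ≤ β Q + e) : IsTruncation e (imageRank α α) (imageRank α β) where
  sub_le_sub x y t hxy hyt := by
    have := componentCount_sublevel_add_le hα hyt (fun Q (hQ : α Q ≤ x) => hQ.trans hxy)
      (fun _ => id) (fun Q (hQ : α Q ≤ t) => (hβα Q).trans hQ)
    unfold imageRank
    lia
  sub_le_sub_shift x y t hxy hyt := by
    have := componentCount_sublevel_add_le hβ (lt_sub_iff_add_lt.2 hyt)
      (fun Q (hQ : α Q ≤ x) => hQ.trans hxy) (fun Q (hQ : α Q ≤ y) => (hβα Q).trans hQ)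
      (fun Q (hQ : β Q ≤ t - e) => (hαβ Q).trans (le_sub_iff_add_le.1 hQ))
    unfold imageRank
    lia

theorem isTruncation_reflect_imageRank (hβ : Continuous β) (hβα : β ≤ α)
    (hαβ : ∀ Q, α Q ≤ β Q + e) :
    IsTruncation e (reflect (imageRank β β)) (reflect (imageRank α β)) where
  sub_le_sub x y t hxy hyt := by
    have := componentCount_sublevel_add_le hβ (neg_lt_neg hyt)
      (fun Q (hQ : α Q ≤ -t) => (hβα Q).trans hQ) (fun _ => id)
      (fun Q (hQ : β Q ≤ -y) => hQ.trans (neg_le_neg hxy))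
    unfold reflect imageRank
    lia
  sub_le_sub_shift x y t hxy hyt := by
    have := componentCount_sublevel_add_le hβ (by linarith : -(t - e) < -y)
      (fun Q (hQ : β Q ≤ -t) => show α Q ≤ -(t - e) by linarith [hαβ Q])
      (fun Q (hQ : α Q ≤ -(t - e)) => (hβα Q).trans hQ)
      (fun Q (hQ : β Q ≤ -y) => hQ.trans (neg_le_neg hxy))
    unfold reflect imageRank
    lia

theorem multInf_pos (hφ : Continuous φ) {P : M} (hP : ∀ Q, φ P ≤ φ Q) : 0 < multInf φ (φ P) := by
  have hpos : ∀ z ∈ {z : ℤ | ∃ ε : ℝ, 0 < ε ∧ φ P + ε < 1 / ε ∧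
      z = (rsf φ (φ P + ε) (1 / ε) : ℤ) - (rsf φ (φ P - ε) (1 / ε) : ℤ)}, 0 < z := by
    rintro _ ⟨ε, hε, hlt, rfl⟩
    have hempty : {Q | φ Q ≤ φ P - ε} = ∅ := eq_empty_of_forall_notMem
      fun Q (hQ : φ Q ≤ φ P - ε) => by linarith [hP Q]
    have hcount : 0 < componentCount {Q | φ Q ≤ φ P + ε} {Q | φ Q ≤ 1 / ε} :=
      (ncard_pos (finite_connectedComponentIn_image_sublevel hφ hlt)).2
        ⟨_, P, by simpa using hε.le, rfl⟩
    simpa [rsf_eq_componentCount, hempty, componentCount] using hcount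
  obtain ⟨ε, hε, hlt⟩ : ∃ ε : ℝ, 0 < ε ∧ φ P + ε < 1 / ε := by
    obtain ⟨ε, hinv, hε, hε₁⟩ := ((tendsto_inv_nhdsGT_zero.eventually_gt_atTop (φ P + 1)).and
      (Ioo_mem_nhdsGT zero_lt_one)).exists
    exact ⟨ε, hε, by rw [one_div]; linarith⟩
  exact hpos _ (Int.csInf_mem ⟨_, ε, hε, hlt, rfl⟩ ⟨0, fun z hz => (hpos z hz).le⟩)

end Components

theorem exists_multInf_pos {M : Type*} [TopologicalSpace M] [CompactSpace M]
    [LocallyConnectedSpace M] [Nonempty M] {φ ψ : M → ℝ} (hφ : Continuous φ) (hψ : Continuous ψ)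
    {ε : ℝ} (hφψ : ∀ Q, |φ Q - ψ Q| ≤ ε) :
    ∃ k k', 0 < multInf φ k ∧ 0 < multInf ψ k' ∧ |k - k'| ≤ ε := by
  obtain ⟨P, hP⟩ := hφ.exists_forall_le_of_hasCompactSupport (.of_compactSpace φ)
  obtain ⟨P', hP'⟩ := hψ.exists_forall_le_of_hasCompactSupport (.of_compactSpace ψ)
  refine ⟨φ P, ψ P', multInf_pos hφ hP, multInf_pos hψ hP', abs_le.2 ⟨?_, ?_⟩⟩
  · linarith [(abs_le.1 (hφψ P)).1, hP' P]
  · linarith [(abs_le.1 (hφψ P')).2, hP P']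

/-- A pitfall of the encoding: `IsRepSeq` lists a single cornerpoint at infinity even when `M` has
several components. -/
theorem matching_stability_general {M : Type*} [TopologicalSpace M] [CompactSpace M]
    [LocallyConnectedSpace M] [Nonempty M] {φ ψ : M → ℝ} (hφ : Continuous φ) (hψ : Continuous ψ)
    {ε : ℝ} (hφψ : ∀ Q, |φ Q - ψ Q| ≤ ε) : dMatch φ ψ ≤ ENNReal.ofReal ε := by
  let β : M → ℝ := fun Q => ψ Q - ε
  have hβ : Continuous β := hψ.sub continuous_const
  have hβφ : β ≤ φ := fun Q => sub_le_comm.1 (abs_sub_le_iff.1 (hφψ Q)).2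
  have hφβ : ∀ Q, φ Q ≤ β Q + 2 * ε := fun Q =>
    show φ Q ≤ ψ Q - ε + 2 * ε by linarith [(abs_sub_le_iff.1 (hφψ Q)).1]
  have hq : IsDiagram (mult ψ) fun b => barPoint (imageRank β β) b + (ε, ε) :=
    (isDiagram_mult hβ).map (Equiv.addRight (ε, ε)) (by simp) fun z => (mult_sub_const ψ ε z).symm
  have hR := isRankFunction_imageRank hφ hφ le_rfl
  have hT := isRankFunction_imageRank hβ hβ le_rfl
  obtain ⟨u, v, huv⟩ := (isTruncation_imageRank hφ hβ hβφ hφβ).exists_isPartialMatching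
    ((abs_nonneg _).trans (hφψ (Classical.arbitrary M))) hR
    (isRankFunction_imageRank hφ hβ hβφ) hT (isTruncation_reflect_imageRank hβ hβφ hφβ)
    hR.isDiagram_barPoint hT.isDiagram_barPoint
  have := hR.countable_bars.to_subtype
  have := hT.countable_bars.to_subtype
  obtain ⟨k, k', hk, hk', hkk'⟩ := exists_multInf_pos hφ hψ hφψ
  exact huv.dMatch_le (isDiagram_mult hφ) hq hk hk' hkk'

theorem matching_stability
    {M : Type*} [TopologicalSpace M] [CompactSpace M] [ConnectedSpace M] [LocallyConnectedSpace M] [T2Space M] {φ ψ : M → ℝ} (hφ : Continuous φ) (hψ : Continuous ψ)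
    (ε : ℝ) (hε : 0 ≤ ε) (hb : ∀ Q : M, |φ Q - ψ Q| ≤ ε) :
    dMatch φ ψ ≤ ENNReal.ofReal ε :=
  matching_stability_general hφ hψ hb
end
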